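/- arXiv:2108.13927 — 6 statements merged into one kernel-verified Lean document; each statement's English description precedes it below -/
import Mathlib

section
/- For every natural number c and every integer n ≥ c+2, writing n' = n−c−1, the reset threshold of the partial finite automaton C_n^c equals n'·(n'−1) + c + 1 + f_c(n'). -/
/-- Partial transition function of the PFA `C_n^c`. `false` is letter `a`, `true` is letter `b`. -/
def cernyStep (c n q : ℕ) : Bool → Option ℕ
  | false =>
      if q ≤ n - c - 1 then some (q + 1)
      else if q = n then some 1 else none
  | true =>
      if q ≤ n - c - 1 then some q
      else if q = n then some 1 else some (q + 1)

/-- Action of a word on a state (`none` if undefined at some step). -/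
def cernyRun (c n : ℕ) (q : ℕ) (w : List Bool) : Option ℕ :=
  List.foldlM (cernyStep c n) q w

/-- A word is synchronizing for `C_n^c`. -/
def IsSync (c n : ℕ) (w : List Bool) : Prop :=
  ∃ qs : ℕ, ∀ q ∈ Finset.Icc 1 n, cernyRun c n q w = some qs

/-- The reset threshold of `C_n^c`: minimal length of a synchronizing word. -/
noncomputable def resetThreshold (c n : ℕ) : ℕ :=
  sInf { L : ℕ | ∃ w : List Bool, w.length = L ∧ IsSync c n w }

/-- The solution `f_c` of the pawn race problem:
`f_c(1) = 0` and `f_c(n) = min { f_c(i) + f_c(n-i) + (c+1)·n - i | 1 ≤ i ≤ n-1 }` for `n ≥ 2`. -/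
def fc (c : ℕ) : ℕ → ℕ
  | 0 => 0
  | 1 => 0
  | n + 2 =>
      (Finset.Icc 1 (n + 1)).attach.inf'
        (Finset.attach_nonempty_iff.mpr ⟨1, by simp⟩)
        (fun i => fc c i.1 + fc c (n + 2 - i.1) + (c + 1) * (n + 2) - i.1)
termination_by n => n
decreasing_by
  all_goals
    have h := i.2
    simp only [Finset.mem_Icc] at h
    omega


/-- lifted step -/
def stp (m c : ℕ) (l : Bool) (z : ℕ) : ℕ :=
  if l = false ∨ m ≤ z % (m + c + 1) then z + 1 else z

def XX (m c : ℕ) (w : ℕ → Bool) : ℕ → ℕ → ℕ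
  | 0, z => z
  | t + 1, z => stp m c (w t) (XX m c w t z)

def EE (m c z : ℕ) : ℕ := (m + 1) * (z / (m + c + 1)) + min (z % (m + c + 1)) m

def Dfd (m c : ℕ) (l : Bool) (z : ℕ) : Prop :=
  l = false → z % (m + c + 1) < m ∨ z % (m + c + 1) = m + c

lemma succ_dm (n z : ℕ) (hn : 0 < n) :
    (z % n + 1 < n ∧ (z + 1) % n = z % n + 1 ∧ (z + 1) / n = z / n) ∨
    (z % n + 1 = n ∧ (z + 1) % n = 0 ∧ (z + 1) / n = z / n + 1) := by
  have h1 := Nat.mod_lt z hn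
  have h2 := Nat.div_add_mod z n
  rcases Nat.lt_or_ge (z % n + 1) n with h | h
  · left
    have e : z + 1 = (z % n + 1) + n * (z / n) := by omega
    refine ⟨h, ?_, ?_⟩
    · rw [e, Nat.add_mul_mod_self_left, Nat.mod_eq_of_lt h]
    · rw [e, Nat.add_mul_div_left _ _ hn, Nat.div_eq_of_lt h, Nat.zero_add]
  · right
    have e : z + 1 = 0 + n * (z / n + 1) := by rw [Nat.mul_add]; omega
    refine ⟨by omega, ?_, ?_⟩
    · rw [e, Nat.add_mul_mod_self_left, Nat.zero_mod]
    · rw [e, Nat.add_mul_div_left _ _ hn, Nat.zero_div, Nat.zero_add]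

lemma EE_a (m c z : ℕ) (h : z % (m + c + 1) < m ∨ z % (m + c + 1) = m + c) :
    EE m c (z + 1) = EE m c z + 1 := by
  unfold EE
  rcases succ_dm (m + c + 1) z (by omega) with ⟨h1, h2, h3⟩ | ⟨h1, h2, h3⟩
  · rw [h2, h3]; omega
  · rw [h2, h3, Nat.mul_add]; omega

lemma EE_b (m c z : ℕ) (h : m ≤ z % (m + c + 1)) :
    (z % (m + c + 1) < m + c ∧ EE m c (z + 1) = EE m c z ∧
      (z + 1) / (m + c + 1) = z / (m + c + 1)) ∨
    (z % (m + c + 1) = m + c ∧ (z + 1) % (m + c + 1) = 0 ∧ EE m c (z + 1) = EE m c z + 1 ∧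
      (z + 1) / (m + c + 1) = z / (m + c + 1) + 1) := by
  unfold EE
  rcases succ_dm (m + c + 1) z (by omega) with ⟨h1, h2, h3⟩ | ⟨h1, h2, h3⟩
  · rw [h2, h3]; omega
  · rw [h2, h3, Nat.mul_add]; omega

lemma EE_mono (m c : ℕ) {p q : ℕ} (h : p ≤ q) : EE m c p ≤ EE m c q := by
  induction q, h using Nat.le_induction with
  | base => exact le_rfl
  | succ q hq ih =>
    by_cases h1 : q % (m + c + 1) < m
    · rw [EE_a m c q (Or.inl h1)]; omega
    · rcases EE_b m c q (by omega) with h2 | h2 <;> omega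

/-- if the successor position has low residue then `EE` strictly increases -/
lemma EE_inj_low (m c : ℕ) {p q : ℕ} (h : p < q) (hp : p % (m + c + 1) < m) :
    EE m c p < EE m c q := by
  have := EE_mono m c (show p + 1 ≤ q from h)
  rw [EE_a m c p (Or.inl hp)] at this
  omega

def JJ (m c p q : ℕ) : Prop := p = q ∨ EE m c p < EE m c q

lemma EE_lt_lt (m c : ℕ) {p q : ℕ} (h : EE m c p < EE m c q) : p < q := by
  by_contra h1
  have := EE_mono m c (show q ≤ p by omega)
  omega

lemma JJ_step (m c : ℕ) (hm : 0 < m) (l : Bool) {p q : ℕ} (hp : Dfd m c l p) (hq : Dfd m c l q)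
    (h : JJ m c p q) : JJ m c (stp m c l p) (stp m c l q) := by
  rcases h with h | h
  · left; rw [h]
  · cases l with
    | false =>
      right
      simp only [stp, true_or, if_true]
      rw [EE_a m c p (hp rfl), EE_a m c q (hq rfl)]; omega
    | true =>
      have hlt := EE_lt_lt m c h
      have hq1 : EE m c q ≤ EE m c (stp m c true q) := by
        apply EE_mono; unfold stp; split_ifs <;> omega
      by_cases h1 : m ≤ p % (m + c + 1)
      · have e : stp m c true p = p + 1 := by simp [stp, h1]
        rw [e]
        rcases EE_b m c p h1 with ⟨h2, h3, h4⟩ | ⟨h2, h3, h4, h5⟩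
        · right; omega
        · by_cases h6 : p + 1 = q
          · left
            have h7 : ¬ m ≤ q % (m + c + 1) := by rw [← h6, h3]; omega
            simp [stp, h7, h6]
          · right
            have := EE_inj_low m c (show p + 1 < q by omega) (by omega)
            omega
      · have e : stp m c true p = p := by simp [stp]; omega
        rw [e]; right; omega

lemma stp_mono (m c : ℕ) (l : Bool) {p q : ℕ} (h : p ≤ q) : stp m c l p ≤ stp m c l q := by
  rcases Nat.eq_or_lt_of_le h with h | h
  · rw [h]
  · unfold stp; split_ifs <;> omega

lemma XX_mono (m c : ℕ) (w : ℕ → Bool) (t : ℕ) {p q : ℕ} (h : p ≤ q) :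
    XX m c w t p ≤ XX m c w t q := by
  induction t with
  | zero => exact h
  | succ t ih => exact stp_mono m c _ ih

lemma stp_shift (m c : ℕ) (l : Bool) (p : ℕ) :
    stp m c l (p + (m + c + 1)) = stp m c l p + (m + c + 1) := by
  unfold stp
  rw [Nat.add_mod_right]
  split_ifs <;> omega

lemma XX_shift (m c : ℕ) (w : ℕ → Bool) (t p : ℕ) :
    XX m c w t (p + (m + c + 1)) = XX m c w t p + (m + c + 1) := by
  induction t with
  | zero => rfl
  | succ t ih => simp only [XX]; rw [ih, stp_shift]

lemma EE_shift (m c p : ℕ) : EE m c (p + (m + c + 1)) = EE m c p + (m + 1) := by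
  unfold EE
  rw [Nat.add_mod_right, Nat.add_div_right _ (by omega), Nat.mul_add]
  omega

lemma Dfd_shift (m c : ℕ) (l : Bool) (p : ℕ) :
    Dfd m c l (p + (m + c + 1)) ↔ Dfd m c l p := by
  unfold Dfd; rw [Nat.add_mod_right]

lemma XX_eq_later (m c : ℕ) (w : ℕ → Bool) {p q t t' : ℕ} (h : t ≤ t')
    (he : XX m c w t p = XX m c w t q) : XX m c w t' p = XX m c w t' q := by
  induction t', h using Nat.le_induction with
  | base => exact he
  | succ t' _ ih => simp only [XX]; rw [ih]

/-- starting lifted position of pawn `u` -/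
def yy (m c u : ℕ) : ℕ := u + (c + 1) * (u / m)

lemma yy_eq (m c u : ℕ) : yy m c u = u % m + (m + c + 1) * (u / m) := by
  have := Nat.div_add_mod u m
  unfold yy
  have e : (m + c + 1) * (u / m) = m * (u / m) + (c + 1) * (u / m) := by ring
  omega

lemma yy_mod (m c u : ℕ) (hm : 0 < m) : yy m c u % (m + c + 1) = u % m := by
  have := Nat.mod_lt u hm
  rw [yy_eq, Nat.add_mul_mod_self_left, Nat.mod_eq_of_lt (by omega)]

lemma yy_div (m c u : ℕ) (hm : 0 < m) : yy m c u / (m + c + 1) = u / m := by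
  have := Nat.mod_lt u hm
  rw [yy_eq, Nat.add_mul_div_left _ _ (by omega), Nat.div_eq_of_lt (by omega), Nat.zero_add]

lemma yy_lt (m c : ℕ) {u v : ℕ} (h : u < v) : yy m c u < yy m c v := by
  unfold yy
  have := Nat.div_le_div_right (c := m) h.le
  have := Nat.mul_le_mul_left (c + 1) this
  omega

lemma yy_E (m c u : ℕ) (hm : 0 < m) : EE m c (yy m c u) = u + u / m := by
  have h := Nat.mod_lt u hm
  unfold EE
  rw [yy_mod m c u hm, yy_div m c u hm, min_eq_left h.le]
  have := Nat.div_add_mod u m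
  rw [Nat.add_mul]; omega

def AA (w : ℕ → Bool) : ℕ → ℕ
  | 0 => 0
  | t + 1 => AA w t + if w t = false then 1 else 0

def Hol (m c : ℕ) (w : ℕ → Bool) (u s t : ℕ) : Prop :=
  w t = true ∧ ∃ v, u ≤ v ∧ v < u + s ∧ m ≤ XX m c w t (yy m c v) % (m + c + 1)

open Classical in
noncomputable def BB (m c : ℕ) (w : ℕ → Bool) (u s : ℕ) : ℕ → ℕ
  | 0 => 0
  | t + 1 => BB m c w u s t + if Hol m c w u s t then 1 else 0

lemma AB_le (m c : ℕ) (w : ℕ → Bool) (u s t : ℕ) : AA w t + BB m c w u s t ≤ t := by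
  induction t with
  | zero => simp [AA, BB]
  | succ t ih =>
    simp only [AA, BB]
    by_cases h : w t = false
    · have : ¬ Hol m c w u s t := by simp [Hol, h]
      simp only [h, this, if_true, if_false]; omega
    · split_ifs <;> omega

/-- monotonicity: the group pays at least as much as its last pawn -/
lemma BB_step (m c : ℕ) (w : ℕ → Bool) (u s t t' : ℕ) (hs : 0 < s) (h : t ≤ t') :
    BB m c w u s t + AA w t + XX m c w t' (yy m c u) ≤
      BB m c w u s t' + AA w t' + XX m c w t (yy m c u) := by
  induction t', h using Nat.le_induction with
  | base => exact le_rfl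
  | succ t' _ ih =>
    simp only [AA, BB, XX, stp]
    by_cases h : w t' = false
    · simp only [h, true_or, if_true]; omega
    · replace h : w t' = true := by simpa using h
      simp only [h, reduceCtorEq, false_or, if_false]
      by_cases h2 : m ≤ XX m c w t' (yy m c u) % (m + c + 1)
      · have : Hol m c w u s t' := ⟨h, u, le_rfl, by omega, h2⟩
        simp only [h2, this, if_true]; omega
      · simp only [h2, if_false]; omega

lemma EE_run (m c : ℕ) (w : ℕ → Bool) (z t : ℕ)
    (hd : ∀ r < t, Dfd m c (w r) (XX m c w r z)) :
    EE m c z + AA w t ≤ EE m c (XX m c w t z) ∧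
    EE m c (XX m c w t z) + z / (m + c + 1) ≤
      EE m c z + AA w t + XX m c w t z / (m + c + 1) := by
  induction t with
  | zero => simp [AA, XX]
  | succ t ih =>
    have ih := ih (fun r hr => hd r (by omega))
    have hd := hd t (by omega)
    simp only [AA, XX]
    generalize XX m c w t z = x at *
    cases hw : w t with
    | false =>
      rw [hw] at hd
      simp only [stp, true_or, if_true]
      rw [EE_a m c x (hd rfl)]
      have := Nat.div_le_div_right (c := m + c + 1) (show x ≤ x + 1 by omega)
      omega
    | true =>
      by_cases h2 : m ≤ x % (m + c + 1)
      · simp only [stp, h2, or_true, if_true]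
        rcases EE_b m c x h2 with h3 | h3 <;> simp <;> omega
      · simp [stp, h2]; omega

/-- numeric facts at a merged position -/
lemma num_facts (m c : ℕ) (hm : 0 < m) (w : ℕ → Bool) (u l t x : ℕ) (hul : u ≤ l)
    (hd : ∀ r < t, ∀ v, u ≤ v → v ≤ l → Dfd m c (w r) (XX m c w r (yy m c v)))
    (hu : XX m c w t (yy m c u) = x) (hl : XX m c w t (yy m c l) = x) :
    (l - u) + l / m ≤ x / (m + c + 1) ∧
    AA w t + c * (x / (m + c + 1)) + l + l / m ≤ x ∧
    m * (x / (m + c + 1)) ≤ AA w t + u := by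
  have h1 := (EE_run m c w (yy m c u) t (fun r hr => hd r hr u le_rfl hul)).2
  have h2 := (EE_run m c w (yy m c l) t (fun r hr => hd r hr l hul le_rfl)).1
  rw [hu, yy_E m c u hm, yy_div m c u hm] at h1
  rw [hl, yy_E m c l hm] at h2
  have h3 := Nat.div_add_mod x (m + c + 1)
  unfold EE at h1 h2
  have e1 : (m + c + 1) * (x / (m + c + 1)) = m * (x / (m + c + 1)) + c * (x / (m + c + 1)) +
    x / (m + c + 1) := by ring
  have e2 : (m + 1) * (x / (m + c + 1)) = m * (x / (m + c + 1)) + x / (m + c + 1) := by ring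
  omega

lemma fc_le (c s i : ℕ) (h1 : 1 ≤ i) (h2 : i < s) :
    fc c s + i ≤ fc c i + fc c (s - i) + (c + 1) * s := by
  obtain ⟨k, rfl⟩ : ∃ k, s = k + 2 := ⟨s - 2, by omega⟩
  rw [fc]
  have := Finset.inf'_le (s := (Finset.Icc 1 (k + 1)).attach)
    (fun i => fc c i.1 + fc c (k + 2 - i.1) + (c + 1) * (k + 2) - i.1)
    (b := ⟨i, by simp; omega⟩) (Finset.mem_attach _ _)
  have h3 : (c + 1) * (k + 2) ≥ k + 2 := Nat.le_mul_of_pos_left _ (by omega)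
  have h4 := Nat.add_le_add_right this i
  refine h4.trans ?_
  simp only
  omega

lemma fc_ex (c s : ℕ) (hs : 2 ≤ s) : ∃ i, 1 ≤ i ∧ i < s ∧
    fc c s + i = fc c i + fc c (s - i) + (c + 1) * s := by
  obtain ⟨k, rfl⟩ : ∃ k, s = k + 2 := ⟨s - 2, by omega⟩
  rw [fc]
  obtain ⟨⟨i, hi⟩, _, he⟩ := Finset.exists_mem_eq_inf' (s := (Finset.Icc 1 (k + 1)).attach)
    (Finset.attach_nonempty_iff.mpr ⟨1, by simp⟩)
    (fun i => fc c i.1 + fc c (k + 2 - i.1) + (c + 1) * (k + 2) - i.1)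
  have h3 : (c + 1) * (k + 2) ≥ k + 2 := Nat.le_mul_of_pos_left _ (by omega)
  simp only [Finset.mem_Icc] at hi
  refine ⟨i, by omega, by omega, ?_⟩
  rw [he]
  simp only
  omega

lemma fc_one (c : ℕ) : fc c 1 = 0 := by rw [fc]

lemma JJ_run (m c : ℕ) (hm : 0 < m) (w : ℕ → Bool) (p q t : ℕ)
    (hp : ∀ r < t, Dfd m c (w r) (XX m c w r p))
    (hq : ∀ r < t, Dfd m c (w r) (XX m c w r q))
    (h : JJ m c p q) : JJ m c (XX m c w t p) (XX m c w t q) := by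
  induction t with
  | zero => exact h
  | succ t ih =>
    exact JJ_step m c hm _ (hp t (by omega)) (hq t (by omega))
      (ih (fun r hr => hp r (by omega)) (fun r hr => hq r (by omega)))

lemma hole_sep (m c : ℕ) (hm : 0 < m) (w : ℕ → Bool) (v1 v2 N r : ℕ) (h12 : v1 < v2)
    (h21 : v2 < v1 + m) (hr : r ≤ N)
    (h1 : ∀ t < N, Dfd m c (w t) (XX m c w t (yy m c v1)))
    (h2 : ∀ t < N, Dfd m c (w t) (XX m c w t (yy m c v2)))
    (hN : XX m c w N (yy m c v1) = XX m c w N (yy m c v2))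
    (g1 : m ≤ XX m c w r (yy m c v1) % (m + c + 1))
    (g2 : m ≤ XX m c w r (yy m c v2) % (m + c + 1)) :
    XX m c w r (yy m c v1) = XX m c w r (yy m c v2) := by
  have a1 : JJ m c (yy m c v1) (yy m c v2) := by
    right
    rw [yy_E m c v1 hm, yy_E m c v2 hm]
    have := Nat.div_le_div_right (c := m) h12.le
    omega
  have a2 : JJ m c (yy m c v2) (yy m c v1 + (m + c + 1)) := by
    right
    rw [EE_shift, yy_E m c v1 hm, yy_E m c v2 hm]
    have := Nat.div_le_div_right (c := m) h21.le
    rw [Nat.add_div_right _ hm] at this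
    omega
  have b1 := JJ_run m c hm w _ _ r (fun t ht => h1 t (by omega)) (fun t ht => h2 t (by omega)) a1
  have b2 := JJ_run m c hm w _ _ r (fun t ht => h2 t (by omega))
    (fun t ht => by rw [XX_shift, Dfd_shift]; exact h1 t (by omega)) a2
  rcases b1 with b1 | b1
  · exact b1
  · exfalso
    rcases b2 with b2 | b2
    · have := XX_eq_later m c w hr b2
      rw [XX_shift] at this
      omega
    · rw [XX_shift, EE_shift] at b2
      unfold EE at b1 b2
      rw [min_eq_right g1, min_eq_right g2] at b1 b2
      have c1 := Nat.lt_of_mul_lt_mul_left (Nat.lt_of_add_lt_add_right b1)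
      have c2 := Nat.mul_le_mul_left (m + 1) (Nat.succ_le_of_lt c1)
      rw [Nat.succ_eq_add_one, Nat.mul_add] at c2
      omega

lemma BB_add (m c : ℕ) (w : ℕ → Bool) (u s1 s2 t : ℕ)
    (h : ∀ r < t, ¬ (Hol m c w u s1 r ∧ Hol m c w (u + s1) s2 r)) :
    BB m c w u s1 t + BB m c w (u + s1) s2 t ≤ BB m c w u (s1 + s2) t := by
  induction t with
  | zero => simp [BB]
  | succ t ih =>
    have ih := ih (fun r hr => h r (by omega))
    have h := h t (by omega)
    simp only [BB]
    have i1 : Hol m c w u s1 t → Hol m c w u (s1 + s2) t := by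
      rintro ⟨a, v, b1, b2, b3⟩; exact ⟨a, v, b1, by omega, b3⟩
    have i2 : Hol m c w (u + s1) s2 t → Hol m c w u (s1 + s2) t := by
      rintro ⟨a, v, b1, b2, b3⟩; exact ⟨a, v, by omega, by omega, b3⟩
    split_ifs <;> first | omega | (exfalso; tauto)

lemma race (m c : ℕ) (hm : 0 < m) (w : ℕ → Bool) (N k : ℕ)
    (hd : ∀ r < N, ∀ v, k ≤ v → v < k + m → Dfd m c (w r) (XX m c w r (yy m c v))) :
    ∀ s, 0 < s → ∀ u t, k ≤ u → u + s ≤ k + m → t ≤ N →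
      (∀ v, u ≤ v → v < u + s → XX m c w t (yy m c v) = XX m c w t (yy m c u)) →
      fc c s + XX m c w t (yy m c u) ≤
        BB m c w u s t + AA w t + yy m c u + (c + 1) * (s - 1) := by
  intro s
  induction s using Nat.strong_induction_on with
  | _ s ih =>
  intro hs u t hu hus ht hmer
  rcases Nat.lt_or_ge s 2 with hs2 | hs2
  · obtain rfl : s = 1 := by omega
    have := BB_step m c w u 1 0 t (by omega) (by omega)
    simp only [BB, AA, XX, zero_add] at this
    rw [fc_one]; omega
  classical
  have hex : ∃ t, ∀ v, u ≤ v → v < u + s → XX m c w t (yy m c v) = XX m c w t (yy m c u) :=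
    ⟨t, hmer⟩
  obtain ⟨t', ht'⟩ : ∃ t', t' = Nat.find hex := ⟨_, rfl⟩
  have hm' := Nat.find_spec hex
  have hle := Nat.find_min' hex hmer
  have hmin : ∀ r < t', ¬ _ := fun r hr => Nat.find_min hex (ht' ▸ hr)
  rw [← ht'] at hm' hle
  obtain _ | q := t'
  · exfalso
    have h1 := hm' (u + 1) (by omega) (by omega)
    have h2 := yy_lt m c (show u < u + 1 by omega)
    simp only [XX] at h1
    omega
  have hq := hmin q (by omega)
  push Not at hq
  obtain ⟨k1, hk1⟩ : ∃ k1, k1 = Nat.find hq := ⟨_, rfl⟩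
  have hk := Nat.find_spec hq
  have hkmin : ∀ v < k1, ¬ _ := fun r hr => Nat.find_min hq (hk1 ▸ hr)
  rw [← hk1] at hk
  obtain ⟨ku, kus, kne⟩ := hk
  have huk : u < k1 := by
    rcases Nat.eq_or_lt_of_le ku with h | h
    · subst h; exact absurd rfl kne
    · exact h
  have hback : ∀ v, u ≤ v → v < k1 → XX m c w q (yy m c v) = XX m c w q (yy m c u) := by
    intro v h1 h2
    by_contra h3
    exact hkmin v h2 ⟨h1, by omega, h3⟩
  have hlt : XX m c w q (yy m c u) < XX m c w q (yy m c k1) := by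
    have := XX_mono m c w q (yy_lt m c huk).le
    omega
  have hst := hm' k1 ku kus
  have hfront : ∀ v, k1 ≤ v → v < u + s → XX m c w q (yy m c v) = XX m c w q (yy m c k1) := by
    intro v h1 h2
    have h3 : XX m c w q (yy m c k1) ≤ XX m c w q (yy m c v) := by
      rcases Nat.eq_or_lt_of_le h1 with h | h
      · rw [h]
      · exact XX_mono m c w q (yy_lt m c h).le
    have h4 := hm' v (by omega) h2
    simp only [XX] at h4 hst
    have h5 : XX m c w q (yy m c v) ≤ stp m c (w q) (XX m c w q (yy m c v)) := by
      unfold stp; split_ifs <;> omega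
    have h6 : stp m c (w q) (XX m c w q (yy m c u)) ≤ XX m c w q (yy m c u) + 1 := by
      unfold stp; split_ifs <;> omega
    omega
  obtain ⟨s1, rfl⟩ : ∃ s1, k1 = u + s1 := ⟨k1 - u, by omega⟩
  obtain ⟨s2, rfl⟩ : ∃ s2, s = s1 + s2 := ⟨s - s1, by omega⟩
  have I1 := ih s1 (by omega) (by omega) u (q + 1) hu (by omega) (by omega)
    (fun v a b => hm' v a (by omega))
  have I2 := ih s2 (by omega) (by omega) (u + s1) (q + 1) (by omega) (by omega) (by omega)
    (fun v a b => (hm' v (by omega) (by omega)).trans hst.symm)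
  have hB := BB_add m c w u s1 s2 (q + 1) (by
    rintro r hr ⟨⟨_, v1, a1, a2, a3⟩, ⟨_, v2, b1, b2, b3⟩⟩
    have e := hole_sep m c hm w v1 v2 (q + 1) r (by omega) (by omega) (by omega)
      (fun t ht => hd t (by omega) v1 (by omega) (by omega))
      (fun t ht => hd t (by omega) v2 (by omega) (by omega))
      ((hm' v1 (by omega) (by omega)).trans (hm' v2 (by omega) (by omega)).symm) a3 b3
    have e2 := XX_eq_later m c w (show r ≤ q by omega) e
    have e3 := hback v1 (by omega) (by omega)
    have e4 := hfront v2 (by omega) (by omega)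
    omega)
  have hS := BB_step m c w u (s1 + s2) (q + 1) t hs hle
  obtain ⟨n1, n2, n3⟩ := num_facts m c hm w u (u + (s1 + s2) - 1) (q + 1) _ (by omega)
    (fun r hr v a b => hd r (by omega) v (by omega) (by omega)) rfl
    (hm' (u + (s1 + s2) - 1) (by omega) (by omega))
  have hf := fc_le c (s1 + s2) s1 (by omega) (by omega)
  rw [Nat.add_sub_cancel_left] at hf
  rw [hst] at I2
  generalize XX m c w (q + 1) (yy m c u) = x at *
  have hy : yy m c (u + s1) = u + s1 + (c + 1) * ((u + s1) / m) := rfl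
  have hdv := Nat.div_le_div_right (c := m) (show u + s1 ≤ u + (s1 + s2) - 1 by omega)
  generalize x / (m + c + 1) = V at *
  generalize (u + (s1 + s2) - 1) / m = lm at *
  generalize (u + s1) / m = vm at *
  have p1 : c * ((s1 + s2 - 1) + lm) ≤ c * V := Nat.mul_le_mul_left c (by omega)
  have p2 : (c + 1) * vm ≤ (c + 1) * lm := Nat.mul_le_mul_left _ hdv
  obtain ⟨a, rfl⟩ : ∃ a, s1 = a + 1 := ⟨s1 - 1, by omega⟩
  obtain ⟨b, rfl⟩ : ∃ b, s2 = b + 1 := ⟨s2 - 1, by omega⟩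
  simp only [show a + 1 + (b + 1) - 1 = a + b + 1 by omega, Nat.add_sub_cancel] at *
  have q1 : (c + 1) * (a + 1 + (b + 1)) = c * a + c * b + 2 * c + a + b + 2 := by ring
  have q2 : c * (a + b + 1 + lm) = c * a + c * b + c + c * lm := by ring
  have q3 : (c + 1) * a = c * a + a := by ring
  have q4 : (c + 1) * b = c * b + b := by ring
  have q5 : (c + 1) * (a + b + 1) = c * a + c * b + c + a + b + 1 := by ring
  have q6 : (c + 1) * lm = c * lm + lm := by ring
  omega

lemma core (m c : ℕ) (hm : 0 < m) (w : ℕ → Bool) (N k : ℕ) (hk1 : 0 < k) (hk : k ≤ m)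
    (hd : ∀ r < N, ∀ v, k ≤ v → v < k + m → Dfd m c (w r) (XX m c w r (yy m c v)))
    (hmer : ∀ v, k ≤ v → v < k + m → XX m c w N (yy m c v) = XX m c w N (yy m c k)) :
    m * (m - 1) + fc c m ≤ N := by
  have h1 := race m c hm w N k hd m hm k N le_rfl le_rfl le_rfl hmer
  have h2 := AB_le m c w k m N
  obtain ⟨n1, n2, n3⟩ := num_facts m c hm w k (k + m - 1) N _ (by omega)
    (fun r hr v a b => hd r (by omega) v (by omega) (by omega)) rfl
    (hmer (k + m - 1) (by omega) (by omega))
  generalize XX m c w N (yy m c k) = x at *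
  have hlm : 1 ≤ (k + m - 1) / m := by
    rw [Nat.one_le_div_iff hm]; omega
  have hkm : k / m ≤ (k + m - 1) / m := Nat.div_le_div_right (by omega)
  have hy : yy m c k = k + (c + 1) * (k / m) := rfl
  generalize x / (m + c + 1) = V at *
  generalize (k + m - 1) / m = lm at *
  generalize k / m = vm at *
  have p1 : c * ((m - 1) + lm) ≤ c * V := Nat.mul_le_mul_left c (by omega)
  have p2 : (c + 1) * vm ≤ (c + 1) * lm := Nat.mul_le_mul_left _ hkm
  have p3 : m * m ≤ m * V := Nat.mul_le_mul_left m (by omega)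
  obtain ⟨a, rfl⟩ : ∃ a, m = a + 1 := ⟨m - 1, by omega⟩
  simp only [Nat.add_sub_cancel] at *
  have q2 : c * (a + lm) = c * a + c * lm := by ring
  have q3 : (c + 1) * a = c * a + a := by ring
  have q6 : (c + 1) * lm = c * lm + lm := by ring
  have q7 : (a + 1) * (a + 1) = (a + 1) * a + a + 1 := by ring
  omega

lemma cernyStep_lift (m c z q : ℕ) (l : Bool)
    (h : cernyStep c (m + c + 1) (z % (m + c + 1) + 1) l = some q) :
    Dfd m c l z ∧ q = stp m c l z % (m + c + 1) + 1 := by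
  have e : m + c + 1 - c - 1 = m := by omega
  cases l with
  | false =>
    simp only [cernyStep, e] at h
    simp only [Dfd, stp, true_or, if_true]
    rcases succ_dm (m + c + 1) z (by omega) with ⟨h1, h2, h3⟩ | ⟨h1, h2, h3⟩
    · rw [h2]
      split_ifs at h with g1 g2
      · simp at h; omega
      · simp at h; omega
    · rw [h2]
      split_ifs at h with g1 g2
      · simp at h; omega
      · simp at h; omega
  | true =>
    simp only [cernyStep, e] at h
    simp only [Dfd, stp, reduceCtorEq, false_or, false_imp_iff, true_and]
    rcases succ_dm (m + c + 1) z (by omega) with ⟨h1, h2, h3⟩ | ⟨h1, h2, h3⟩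
    · split_ifs at h ⊢ <;> simp at h <;> omega
    · split_ifs at h ⊢ <;> simp at h <;> omega

lemma XX_cons (m c : ℕ) (l : Bool) (w : List Bool) (t z : ℕ) :
    XX m c (fun i => (l :: w).getD i false) (t + 1) z =
      XX m c (fun i => w.getD i false) t (stp m c l z) := by
  induction t with
  | zero => simp [XX]
  | succ t ih =>
    rw [XX, ih, XX]
    simp

lemma run_lift (m c : ℕ) (w : List Bool) : ∀ (z q : ℕ),
    cernyRun c (m + c + 1) (z % (m + c + 1) + 1) w = some q →
    q = XX m c (fun i => w.getD i false) w.length z % (m + c + 1) + 1 ∧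
    ∀ t < w.length, Dfd m c (w.getD t false) (XX m c (fun i => w.getD i false) t z) := by
  induction w with
  | nil =>
    intro z q h
    simp [cernyRun] at h
    simp [XX, h]
  | cons l w ih =>
    intro z q h
    unfold cernyRun at h
    rw [List.foldlM_cons] at h
    cases hs : cernyStep c (m + c + 1) (z % (m + c + 1) + 1) l with
    | none => rw [hs] at h; simp at h
    | some q' =>
      rw [hs] at h
      obtain ⟨h1, h2⟩ := cernyStep_lift m c z q' l hs
      subst h2
      obtain ⟨i1, i2⟩ := ih (stp m c l z) q h
      refine ⟨?_, ?_⟩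
      · rw [List.length_cons, XX_cons]; exact i1
      · intro t ht
        cases t with
        | zero => simpa [XX] using h1
        | succ t =>
          rw [XX_cons]
          have := i2 t (by simpa using ht)
          simpa using this

lemma lower_low (m c : ℕ) (hm : 0 < m) (w : List Bool) (qs : ℕ)
    (h : ∀ q, 1 ≤ q → q ≤ m → cernyRun c (m + c + 1) q w = some qs) :
    m * (m - 1) + fc c m ≤ w.length := by
  have hl : ∀ z < m, qs = XX m c (fun i => w.getD i false) w.length z % (m + c + 1) + 1 ∧
    ∀ t < w.length, Dfd m c (w.getD t false) (XX m c (fun i => w.getD i false) t z) := by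
    intro z hz
    apply run_lift
    rw [Nat.mod_eq_of_lt (by omega)]
    exact h _ (by omega) (by omega)
  generalize hW : (fun i => w.getD i false) = W at hl
  have hW' : ∀ t, w.getD t false = W t := fun t => by rw [← hW]
  simp only [hW'] at hl
  generalize w.length = N at *
  have hdi : ∀ v < m, XX m c W N v = XX m c W N 0 ∨
      XX m c W N v = XX m c W N 0 + (m + c + 1) := by
    intro v hv
    have h1 := XX_mono m c W N (Nat.zero_le v)
    have h2 := XX_mono m c W N (show v ≤ 0 + (m + c + 1) by omega)
    rw [XX_shift] at h2
    have h3 : XX m c W N 0 ≡ XX m c W N v [MOD (m + c + 1)] := by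
      have := (hl v hv).1
      have := (hl 0 hm).1
      unfold Nat.ModEq; omega
    rw [Nat.modEq_iff_dvd' h1] at h3
    obtain ⟨k, hk⟩ := h3
    rcases k with _ | _ | k
    · left; simp at hk; omega
    · right; simp at hk; omega
    · exfalso
      have : (m + c + 1) * (k + 1 + 1) = (m + c + 1) * k + 2 * (m + c + 1) := by ring
      have := Nat.zero_le ((m + c + 1) * k)
      omega
  classical
  have hex : ∃ k, k = m ∨ XX m c W N k ≠ XX m c W N 0 := ⟨m, Or.inl rfl⟩
  obtain ⟨k, hk⟩ : ∃ k, k = Nat.find hex := ⟨_, rfl⟩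
  have hk2 := Nat.find_spec hex
  have hkm := Nat.find_min' hex (Or.inl rfl)
  have hkmin : ∀ v < k, ¬ _ := fun r hr => Nat.find_min hex (hk ▸ hr)
  rw [← hk] at hk2 hkm
  have hk0 : 0 < k := by
    rcases Nat.eq_zero_or_pos k with h0 | h0
    · subst h0
      rcases hk2 with h | h
      · omega
      · exact absurd rfl h
    · exact h0
  have key : ∀ v, k ≤ v → v < k + m →
      (∃ z, z < m ∧ (yy m c v = z ∧ XX m c W N z = XX m c W N 0 + (m + c + 1) ∨
        yy m c v = z + (m + c + 1) ∧ XX m c W N z = XX m c W N 0)) := by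
    intro v h1 h2
    rcases Nat.lt_or_ge v m with h3 | h3
    · refine ⟨v, h3, Or.inl ⟨?_, ?_⟩⟩
      · simp [yy, Nat.div_eq_of_lt h3]
      · have h4 := XX_mono m c W N h1
        have h5 := XX_mono m c W N (Nat.zero_le k)
        have h6 := hdi v h3
        rcases hk2 with h | h <;> omega
    · refine ⟨v - m, by omega, Or.inr ⟨?_, ?_⟩⟩
      · have : v / m = 1 := by
          rw [show v = v - m + m by omega, Nat.add_div_right _ hm, Nat.div_eq_of_lt (by omega)]
        simp only [yy, this]; omega
      · have := hkmin (v - m) (by omega)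
        push Not at this
        exact this.2
  have key2 : ∀ v, k ≤ v → v < k + m →
      XX m c W N (yy m c v) = XX m c W N 0 + (m + c + 1) := by
    intro v h1 h2
    obtain ⟨z, hz, ⟨a, b⟩ | ⟨a, b⟩⟩ := key v h1 h2
    · rw [a, b]
    · rw [a, XX_shift, b]
  apply core m c hm W N k hk0 hkm
  · intro r hr v h1 h2
    obtain ⟨z, hz, ⟨a, b⟩ | ⟨a, b⟩⟩ := key v h1 h2
    · rw [a]; exact (hl z hz).2 r hr
    · rw [a, XX_shift, Dfd_shift]; exact (hl z hz).2 r hr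
  · intro v h1 h2
    rw [key2 v h1 h2, key2 k le_rfl (by omega)]

lemma run_cons (c n q : ℕ) (l : Bool) (w : List Bool) :
    cernyRun c n q (l :: w) = (cernyStep c n q l).bind (fun q' => cernyRun c n q' w) := by
  unfold cernyRun; rw [List.foldlM_cons]; rfl

lemma lower_all (m c : ℕ) (hm : 0 < m) (qs : ℕ) (w : List Bool) : ∀ j, j ≤ c →
    (∀ q, 1 ≤ q → q ≤ m → cernyRun c (m + c + 1) q w = some qs) →
    cernyRun c (m + c + 1) (m + 1 + j) w = some qs →
    m * (m - 1) + fc c m + (c + 1) ≤ w.length + j := by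
  have e : m + c + 1 - c - 1 = m := by omega
  induction w with
  | nil =>
    intro j hj h1 h2
    have h1 := h1 1 le_rfl hm
    simp [cernyRun] at h1 h2
    omega
  | cons l w ih =>
    intro j hj h1 h2
    rw [run_cons] at h2
    simp only [run_cons] at h1
    rw [List.length_cons]
    cases l with
    | true =>
      have h1' : ∀ q, 1 ≤ q → q ≤ m → cernyRun c (m + c + 1) q w = some qs := by
        intro q a b
        have := h1 q a b
        simpa [cernyStep, e, b] using this
      rcases Nat.lt_or_ge j c with hjc | hjc
      · have := ih (j + 1) (by omega) h1' (by
          have e1 : ¬ (m + 1 + j ≤ m) := by omega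
          have e2 : ¬ (m + 1 + j = m + c + 1) := by omega
          simp only [cernyStep, e, e1, e2, if_false, Option.bind_some] at h2
          exact h2)
        omega
      · have := lower_low m c hm w qs h1'
        omega
    | false =>
      have h1' : ∀ q, 1 ≤ q → q ≤ m → cernyRun c (m + c + 1) (q + 1) w = some qs := by
        intro q a b
        have := h1 q a b
        simpa [cernyStep, e, b] using this
      have e1 : ¬ (m + 1 + j ≤ m) := by omega
      simp only [cernyStep, e, e1, if_false] at h2
      split_ifs at h2 with e2
      · simp only [Option.bind_some] at h2
        have := ih 0 (by omega) (by
          intro q a b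
          rcases Nat.eq_or_lt_of_le a with a | a
          · rw [← a]; exact h2
          · have := h1' (q - 1) (by omega) (by omega)
            rwa [show q - 1 + 1 = q by omega] at this) (h1' m hm le_rfl)
        omega
      · simp at h2

lemma lower_sync (m c : ℕ) (hm : 0 < m) (w : List Bool) (h : IsSync c (m + c + 1) w) :
    m * (m - 1) + c + 1 + fc c m ≤ w.length := by
  obtain ⟨qs, h⟩ := h
  have := lower_all m c hm qs w 0 (by omega)
    (fun q a b => h q (by simp; omega)) (h _ (by rw [Finset.mem_Icc]; omega))
  omega

/-- A pawn schedule for `s` pawns: `S t` occupied positions, `M t` moved positions in round `t`. -/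
structure Sched (c s : ℕ) (S M : ℕ → Finset ℕ) : Prop where
  init : ∀ p < s, p ∈ S 0
  tr : ∀ t < s - 1, t ∈ M t
  sub : ∀ t < s - 1, ∀ p ∈ M t, p ∈ S t
  lo : ∀ t < s - 1, ∀ p ∈ S t, t ≤ p
  hi : ∀ t < s - 1, ∀ p ∈ S t, p < s
  mv : ∀ t < s - 1, ∀ p ∈ M t, p + 1 ∈ S (t + 1)
  st : ∀ t < s - 1, ∀ p ∈ S t, p ∉ M t → p ∈ S (t + 1)
  fin : S (s - 1) = {s - 1}
  cost : ∑ t ∈ Finset.range (s - 1), (c * (S t).card + (M t).card) ≤ fc c s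

lemma sched_comb (c i j : ℕ) (S1 M1 S2 M2 : ℕ → Finset ℕ)
    (h1 : Sched c (i + 1) S1 M1) (h2 : Sched c (j + 1) S2 M2)
    (hf : fc c (i + 1) + fc c (j + 1) + (c + 1) * (j + 1) + c * (i + 1) ≤ fc c (i + j + 2)) :
    ∃ S M, Sched c (i + j + 2) S M := by
  obtain ⟨a1, a2, a3, a4, a5, a6, a7, a8, a9⟩ := h1
  obtain ⟨b1, b2, b3, b4, b5, b6, b7, b8, b9⟩ := h2
  simp only [Nat.add_sub_cancel] at *
  let SB : ℕ → Finset ℕ := fun t => if t ≤ i then S1 t else {t}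
  let MB : ℕ → Finset ℕ := fun t => if t < i then M1 t else {t}
  let SF : ℕ → Finset ℕ := fun t => (if t ≤ j then S2 t else {j}).image (fun p => p + (i + 1))
  let MF : ℕ → Finset ℕ := fun t => if t < j then (M2 t).image (fun p => p + (i + 1)) else ∅
  have B0 : ∀ t, i ≤ t → SB t = {t} := by
    intro t ht
    rcases Nat.eq_or_lt_of_le ht with h | h
    · subst h; simp [SB, a8]
    · simp [SB]; omega
  have F0 : ∀ t, j ≤ t → SF t = {j + (i + 1)} := by
    intro t ht
    rcases Nat.eq_or_lt_of_le ht with h | h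
    · subst h; simp [SF, b8]
    · have : ¬ t ≤ j := by omega
      simp [SF, this]
  have B0' : ∀ t, t < i → SB t = S1 t := fun t ht => by simp [SB, ht.le]
  have B0m : ∀ t, t < i → MB t = M1 t := fun t ht => by simp [MB, ht]
  have B0n : ∀ t, i ≤ t → MB t = {t} := fun t ht => by simp [MB]; omega
  have F0' : ∀ t, t < j → SF t = (S2 t).image (fun p => p + (i + 1)) :=
    fun t ht => by simp [SF, ht.le]
  have F0m : ∀ t, t < j → MF t = (M2 t).image (fun p => p + (i + 1)) :=
    fun t ht => by simp [MF, ht]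
  have F0n : ∀ t, j ≤ t → MF t = ∅ := fun t ht => by simp [MF]; omega
  have SBle : ∀ t, t ≤ i → SB t = S1 t := fun t ht => by simp [SB, ht]
  have SFle : ∀ t, t ≤ j → SF t = (S2 t).image (fun p => p + (i + 1)) :=
    fun t ht => by simp [SF, ht]
  have B1 : ∀ t, t ∈ MB t := by
    intro t
    rcases Nat.lt_or_ge t i with h | h
    · rw [B0m t h]; exact a2 t h
    · rw [B0n t h]; simp
  have B2 : ∀ t, ∀ p ∈ MB t, p ∈ SB t := by
    intro t
    rcases Nat.lt_or_ge t i with h | h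
    · rw [B0m t h, B0' t h]; exact a3 t h
    · rw [B0n t h, B0 t h]; simp
  have B3 : ∀ t, ∀ p ∈ SB t, t ≤ p ∧ (p ≤ i ∨ p = t) := by
    intro t p hp
    rcases Nat.lt_or_ge t i with h | h
    · rw [B0' t h] at hp
      have := a4 t h p hp
      have := a5 t h p hp
      omega
    · rw [B0 t h] at hp; simp at hp; omega
  have B4 : ∀ t, ∀ p ∈ MB t, p + 1 ∈ SB (t + 1) := by
    intro t p hp
    rcases Nat.lt_or_ge t i with h | h
    · rw [B0m t h] at hp; rw [SBle _ (by omega)]; exact a6 t h p hp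
    · rw [B0n t h] at hp; rw [B0 _ (by omega)]; simp at hp ⊢; omega
  have B5 : ∀ t, ∀ p ∈ SB t, p ∉ MB t → p ∈ SB (t + 1) := by
    intro t p hp hq
    rcases Nat.lt_or_ge t i with h | h
    · rw [B0m t h] at hq; rw [B0' t h] at hp; rw [SBle _ (by omega)]; exact a7 t h p hp hq
    · rw [B0n t h] at hq; rw [B0 _ h] at hp; exact absurd hp hq
  have F2 : ∀ t, ∀ p ∈ MF t, p ∈ SF t := by
    intro t
    rcases Nat.lt_or_ge t j with h | h
    · rw [F0m t h, F0' t h]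
      intro p hp
      rw [Finset.mem_image] at hp ⊢
      obtain ⟨x, hx, rfl⟩ := hp
      exact ⟨x, b3 t h x hx, rfl⟩
    · rw [F0n t h]; simp
  have F3 : ∀ t, ∀ p ∈ SF t, i + 1 + min t j ≤ p ∧ p ≤ i + j + 1 := by
    intro t p hp
    rcases Nat.lt_or_ge t j with h | h
    · rw [F0' t h, Finset.mem_image] at hp
      obtain ⟨x, hx, rfl⟩ := hp
      have := b4 t h x hx
      have := b5 t h x hx
      omega
    · rw [F0 t h] at hp; simp at hp; omega
  have F4 : ∀ t, ∀ p ∈ MF t, p + 1 ∈ SF (t + 1) := by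
    intro t p hp
    rcases Nat.lt_or_ge t j with h | h
    · rw [F0m t h, Finset.mem_image] at hp
      obtain ⟨x, hx, rfl⟩ := hp
      rw [SFle _ (by omega), Finset.mem_image]
      exact ⟨x + 1, b6 t h x hx, by omega⟩
    · rw [F0n t h] at hp; simp at hp
  have F5 : ∀ t, ∀ p ∈ SF t, p ∉ MF t → p ∈ SF (t + 1) := by
    intro t p hp hq
    rcases Nat.lt_or_ge t j with h | h
    · rw [F0' t h, Finset.mem_image] at hp
      rw [F0m t h] at hq
      obtain ⟨x, hx, rfl⟩ := hp
      rw [SFle _ (by omega), Finset.mem_image]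
      refine ⟨x, b7 t h x hx (fun hx' => hq ?_), rfl⟩
      exact Finset.mem_image.mpr ⟨x, hx', rfl⟩
    · rw [F0 t h] at hp; rw [F0 _ (by omega)]; exact hp
  have CB : ∑ t ∈ Finset.range (i + (j + 1)), (c * (SB t).card + (MB t).card) ≤
      fc c (i + 1) + (c + 1) * (j + 1) := by
    rw [Finset.sum_range_add]
    apply Nat.add_le_add
    · refine le_trans (le_of_eq ?_) a9
      apply Finset.sum_congr rfl
      intro t ht
      rw [Finset.mem_range] at ht
      rw [B0' t ht, B0m t ht]
    · apply le_of_eq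
      rw [Finset.sum_congr rfl (g := fun _ => c + 1)]
      · simp; ring
      · intro t ht
        rw [B0 _ (by omega), B0n _ (by omega)]; simp
  have CF : ∑ t ∈ Finset.range (j + (i + 1)), (c * (SF t).card + (MF t).card) ≤
      fc c (j + 1) + c * (i + 1) := by
    rw [Finset.sum_range_add]
    apply Nat.add_le_add
    · refine le_trans (Finset.sum_le_sum ?_) b9
      intro t ht
      rw [Finset.mem_range] at ht
      rw [F0' t ht, F0m t ht]
      exact Nat.add_le_add (Nat.mul_le_mul_left c Finset.card_image_le) Finset.card_image_le
    · apply le_of_eq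
      rw [Finset.sum_congr rfl (g := fun _ => c)]
      · simp; ring
      · intro t ht
        rw [F0 _ (by omega), F0n _ (by omega)]; simp
  clear_value SB MB SF MF
  have dis : ∀ t < i + j + 1, ∀ p ∈ SB t, p ∉ SF t := by
    intro t ht p hp hp'
    have := B3 t p hp
    have := F3 t p hp'
    omega
  refine ⟨fun t => SB t ∪ SF t, fun t => MB t ∪ MF t, ?_, ?_, ?_, ?_, ?_, ?_, ?_, ?_, ?_⟩
  · intro p hp
    rw [Finset.mem_union]
    rcases Nat.lt_or_ge p (i + 1) with h | h
    · left; rw [SBle 0 (by omega)]; exact a1 p h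
    · right; rw [SFle 0 (by omega), Finset.mem_image]
      exact ⟨p - (i + 1), b1 _ (by omega), by omega⟩
  · intro t ht; exact Finset.mem_union_left _ (B1 t)
  · intro t ht p hp
    rw [Finset.mem_union] at hp ⊢
    exact hp.imp (B2 t p) (F2 t p)
  · intro t ht p hp
    rw [Finset.mem_union] at hp
    rcases hp with hp | hp
    · have := B3 t p hp; omega
    · have := F3 t p hp; omega
  · intro t ht p hp
    rw [Finset.mem_union] at hp
    rcases hp with hp | hp
    · have := B3 t p hp; omega
    · have := F3 t p hp; omega
  · intro t ht p hp
    rw [Finset.mem_union] at hp ⊢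
    exact hp.imp (B4 t p) (F4 t p)
  · intro t ht p hp hq
    rw [Finset.mem_union] at hp hq ⊢
    push Not at hq
    exact hp.imp (fun h => B5 t p h hq.1) (fun h => F5 t p h hq.2)
  · show SB (i + j + 1) ∪ SF (i + j + 1) = {i + j + 1}
    rw [B0 _ (by omega), F0 _ (by omega), show j + (i + 1) = i + j + 1 by omega]; simp
  · show ∑ t ∈ Finset.range (i + j + 1), _ ≤ _
    calc _ ≤ ∑ t ∈ Finset.range (i + j + 1),
          ((c * (SB t).card + (MB t).card) + (c * (SF t).card + (MF t).card)) := by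
          apply Finset.sum_le_sum
          intro t ht
          have e1 := Nat.mul_le_mul_left c (Finset.card_union_le (SB t) (SF t))
          have e2 := Finset.card_union_le (MB t) (MF t)
          rw [Nat.mul_add] at e1
          omega
      _ ≤ _ := by
          rw [Finset.sum_add_distrib]
          rw [show i + (j + 1) = i + j + 1 by omega] at CB
          rw [show j + (i + 1) = i + j + 1 by omega] at CF
          omega

lemma sched_ex (c : ℕ) : ∀ s, 0 < s → ∃ S M, Sched c s S M := by
  intro s
  induction s using Nat.strong_induction_on with
  | _ s ih =>
  intro hs
  rcases Nat.lt_or_ge s 2 with h | h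
  · obtain rfl : s = 1 := by omega
    exact ⟨fun _ => {0}, fun _ => ∅, by constructor <;> simp⟩
  · obtain ⟨k, k1, k2, k3⟩ := fc_ex c s h
    obtain ⟨S1, M1, h1⟩ := ih k k2 k1
    obtain ⟨S2, M2, h2⟩ := ih (s - k) (by omega) (by omega)
    obtain ⟨i, rfl⟩ : ∃ i, k = i + 1 := ⟨k - 1, by omega⟩
    obtain ⟨j, rfl⟩ : ∃ j, s = i + j + 2 := ⟨s - i - 2, by omega⟩
    have e : i + j + 2 - (i + 1) = j + 1 := by omega
    rw [e] at h2 k3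
    apply sched_comb c i j S1 M1 S2 M2 h1 h2
    have : (c + 1) * (i + j + 2) = (c + 1) * (j + 1) + c * (i + 1) + (i + 1) := by ring
    omega

lemma run_append (c n q : ℕ) (w1 w2 : List Bool) :
    cernyRun c n q (w1 ++ w2) = (cernyRun c n q w1).bind (fun q' => cernyRun c n q' w2) := by
  unfold cernyRun; rw [List.foldlM_append]; rfl

lemma run_low (m c q j : ℕ) (hq : q ≤ m) :
    cernyRun c (m + c + 1) q (List.replicate j true) = some q := by
  have e : m + c + 1 - c - 1 = m := by omega
  induction j with
  | zero => rfl
  | succ j ih =>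
    rw [List.replicate_succ, run_cons]
    simp only [cernyStep, e, hq, if_true, Option.bind_some]; exact ih

lemma run_high (m c j : ℕ) : ∀ i, i + j ≤ c →
    cernyRun c (m + c + 1) (m + 1 + i) (List.replicate j true) = some (m + 1 + i + j) := by
  have e : m + c + 1 - c - 1 = m := by omega
  induction j with
  | zero => intro i h; rfl
  | succ j ih =>
    intro i h
    rw [List.replicate_succ, run_cons]
    have e1 : ¬ (m + 1 + i ≤ m) := by omega
    have e2 : ¬ (m + 1 + i = m + c + 1) := by omega
    simp only [cernyStep, e, e1, e2, if_false, Option.bind_some]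
    rw [show m + 1 + i + 1 = m + 1 + (i + 1) by omega, ih (i + 1) (by omega)]
    congr 1; omega

/-- number of `b`s used when position `p` passes the hole -/
def nb (c : ℕ) (S M : Finset ℕ) (p : ℕ) : ℕ :=
  (if p ∈ S then c else 0) + (if p ∈ M then 1 else 0)

def WW (c t : ℕ) (S M : Finset ℕ) : ℕ → List Bool
  | 0 => []
  | k + 1 => false :: (List.replicate (nb c S M (k + t)) true ++ WW c t S M k)

lemma WW_len (c t : ℕ) (S M : Finset ℕ) (k : ℕ) :
    (WW c t S M k).length ≤ k + (c * S.card + M.card) := by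
  have h : (WW c t S M k).length = k + ∑ x ∈ Finset.range k, nb c S M (x + t) := by
    induction k with
    | zero => simp [WW]
    | succ k ih => simp [WW, Finset.sum_range_succ, ih]; omega
  rw [h]
  have key : ∀ S : Finset ℕ, ∀ d : ℕ,
      ∑ x ∈ Finset.range k, (if x + t ∈ S then d else 0) ≤ d * S.card := by
    intro S d
    rw [← Finset.sum_filter, Finset.sum_const, smul_eq_mul, Nat.mul_comm]
    apply Nat.mul_le_mul_left
    apply Finset.card_le_card_of_injOn (fun x => x + t)
    · intro x hx; simp at hx; simpa using hx.2
    · intro x _ y _ hxy; simpa using hxy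
  unfold nb
  rw [Finset.sum_add_distrib]
  have := key S c
  have := key M 1
  omega

lemma WW_run1 (m c t : ℕ) (S M : Finset ℕ) (k : ℕ) : ∀ z, 1 ≤ z → z + k ≤ m →
    cernyRun c (m + c + 1) z (WW c t S M k) = some (z + k) := by
  have e : m + c + 1 - c - 1 = m := by omega
  induction k with
  | zero => intro z _ _; rfl
  | succ k ih =>
    intro z h1 h2
    have e1 : z ≤ m := by omega
    rw [WW, run_cons]
    simp only [cernyStep, e, e1, if_true, Option.bind_some]
    rw [run_append, run_low _ _ _ _ (by omega), Option.bind_some, ih (z + 1) (by omega) (by omega)]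
    congr 1; omega

lemma WW_run3 (m c t : ℕ) (S M : Finset ℕ) (k : ℕ) (hk : k + 1 ≤ m) :
    cernyRun c (m + c + 1) (m + c + 1) (WW c t S M (k + 1)) = some (k + 1) := by
  have e : m + c + 1 - c - 1 = m := by omega
  have e1 : ¬ (m + c + 1 ≤ m) := by omega
  rw [WW, run_cons]
  simp only [cernyStep, e, e1, if_true, if_false, Option.bind_some]
  rw [run_append, run_low _ _ _ _ (by omega), Option.bind_some,
    WW_run1 m c t S M k 1 (by omega) (by omega)]
  congr 1; omega

lemma WW_run2 (m c t : ℕ) (S M : Finset ℕ) (ht : t ∈ M) (q : ℕ) (hqS : q + t ∈ S) (k : ℕ) :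
    k ≤ m → q < k →
    cernyRun c (m + c + 1) (q + (m - k) + 1) (WW c t S M k) =
      some (if q + t ∈ M then q + 1 else q) := by
  have e : m + c + 1 - c - 1 = m := by omega
  induction k with
  | zero => intro _ h; omega
  | succ k ih =>
    intro hk hq
    rw [WW, run_cons]
    have e1 : q + (m - (k + 1)) + 1 ≤ m := by omega
    simp only [cernyStep, e, e1, if_true, Option.bind_some]
    rw [run_append]
    rcases Nat.lt_or_ge q k with h | h
    · rw [run_low _ _ _ _ (by omega), Option.bind_some,
        show q + (m - (k + 1)) + 1 + 1 = q + (m - k) + 1 by omega]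
      exact ih (by omega) h
    · obtain rfl : q = k := by omega
      rw [show q + (m - (q + 1)) + 1 + 1 = m + 1 + 0 by omega]
      by_cases hM : q + t ∈ M
      · simp only [nb, hqS, hM, if_true]
        rw [List.replicate_succ', run_append, run_high m c c 0 (by omega), Option.bind_some,
          run_cons]
        have e2 : ¬ (m + 1 + 0 + c ≤ m) := by omega
        have e3 : (m + 1 + 0 + c = m + c + 1) := by omega
        simp only [cernyStep, e, e2, e3, if_false, if_true, Option.bind_some]
        have : ¬ (m + c + 1 ≤ m) := by omega
        simp only [this, if_false, Option.bind_some]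
        show (some 1).bind _ = _
        rw [Option.bind_some, WW_run1 m c t S M q 1 (by omega) (by omega)]
        congr 1; omega
      · simp only [nb, hqS, hM, if_true, if_false, Nat.add_zero]
        rw [show m + 1 = m + 1 + 0 by omega, run_high m c c 0 (by omega), Option.bind_some]
        obtain _ | q := q
        · simp at hM; exact absurd ht hM
        · rw [show m + 1 + 0 + c = m + c + 1 by omega, WW_run3 m c t S M q (by omega)]

def VV (m c : ℕ) (S M : ℕ → Finset ℕ) : ℕ → List Bool
  | 0 => []
  | t + 1 => VV m c S M t ++ WW c t (S t) (M t) m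

lemma VV_len (m c : ℕ) (S M : ℕ → Finset ℕ) (t : ℕ) :
    (VV m c S M t).length ≤ m * t + ∑ r ∈ Finset.range t, (c * (S r).card + (M r).card) := by
  induction t with
  | zero => simp [VV]
  | succ t ih =>
    rw [VV, List.length_append, Finset.sum_range_succ, Nat.mul_add]
    have := WW_len c t (S t) (M t) m
    omega

lemma VV_run (m c : ℕ) (S M : ℕ → Finset ℕ) (h : Sched c m S M) (q : ℕ) (hq : q < m) (t : ℕ)
    (ht : t ≤ m - 1) : ∃ p, p + t ∈ S t ∧
      cernyRun c (m + c + 1) (q + 1) (VV m c S M t) = some (p + 1) := by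
  induction t with
  | zero => exact ⟨q, h.init q hq, rfl⟩
  | succ t ih =>
    obtain ⟨p, h1, h2⟩ := ih (by omega)
    have ht' : t < m - 1 := by omega
    have h3 := WW_run2 m c t (S t) (M t) (h.tr t ht') p h1 m le_rfl
      (by have := h.hi t ht' _ h1; omega)
    rw [Nat.sub_self, Nat.add_zero] at h3
    rw [VV, run_append, h2, Option.bind_some, h3]
    by_cases hM : p + t ∈ M t
    · exact ⟨p, h.mv t ht' _ hM, by simp [hM]⟩
    · obtain _ | p := p
      · exact absurd (h.tr t ht') (by simpa using hM)
      · refine ⟨p, ?_, by simp [hM]⟩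
        have := h.st t ht' _ h1 hM
        rwa [show p + (t + 1) = p + 1 + t by omega]

lemma run_first (m c q : ℕ) (hm : 0 < m) (h1 : 1 ≤ q) (h2 : q ≤ m + c + 1) :
    ∃ p, p < m ∧ cernyRun c (m + c + 1) q (List.replicate (c + 1) true) = some (p + 1) := by
  have e : m + c + 1 - c - 1 = m := by omega
  rcases Nat.lt_or_ge m q with h | h
  · refine ⟨0, hm, ?_⟩
    obtain ⟨i, rfl⟩ : ∃ i, q = m + 1 + i := ⟨q - m - 1, by omega⟩
    obtain ⟨j, rfl⟩ : ∃ j, c = i + j := ⟨c - i, by omega⟩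
    rw [show i + j + 1 = j + (1 + i) by omega, List.replicate_add, run_append,
      run_high m (i + j) j i (by omega), Option.bind_some, List.replicate_add, run_append]
    have e2 : ¬ (m + 1 + i + j ≤ m) := by omega
    have e3 : m + 1 + i + j = m + (i + j) + 1 := by omega
    have : cernyRun (i + j) (m + (i + j) + 1) (m + 1 + i + j) (List.replicate 1 true) =
        some 1 := by
      rw [List.replicate_one, run_cons]
      simp only [cernyStep, e, e2, if_false]
      rw [if_pos e3]; rfl
    rw [this, Option.bind_some, run_low _ _ _ _ (by omega)]
  · exact ⟨q - 1, by omega, by rw [run_low _ _ _ _ h]; congr 1; omega⟩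

lemma upper_sync (m c : ℕ) (hm : 0 < m) : ∃ w, IsSync c (m + c + 1) w ∧
    w.length ≤ m * (m - 1) + c + 1 + fc c m := by
  obtain ⟨S, M, h⟩ := sched_ex c m hm
  refine ⟨List.replicate (c + 1) true ++ VV m c S M (m - 1), ⟨1, ?_⟩, ?_⟩
  · intro q hq
    rw [Finset.mem_Icc] at hq
    obtain ⟨p, hp, h1⟩ := run_first m c q hm hq.1 hq.2
    obtain ⟨p', h2, h3⟩ := VV_run m c S M h p hp (m - 1) le_rfl
    rw [run_append, h1, Option.bind_some, h3]
    rw [h.fin] at h2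
    simp at h2
    rw [h2]
  · rw [List.length_append, List.length_replicate]
    have := VV_len m c S M (m - 1)
    have := h.cost
    omega

/-- **Theorem (reduction to the pawn race problem).**
For every `c : ℕ` and every `n ≥ c+2`, writing `n' = n - c - 1`, the reset threshold of the
PFA `C_n^c` equals `n'·(n'-1) + c + 1 + f_c(n')`. -/
theorem resetThreshold_eq_pawnRace (c n : ℕ) (hn : c + 2 ≤ n) :
    resetThreshold c n =
      (n - c - 1) * (n - c - 1 - 1) + c + 1 + fc c (n - c - 1) := by
  obtain ⟨m, rfl⟩ : ∃ m, n = m + c + 1 := ⟨n - c - 1, by omega⟩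
  have e : m + c + 1 - c - 1 = m := by omega
  rw [e]
  have hm : 0 < m := by omega
  obtain ⟨w, hw, hl⟩ := upper_sync m c hm
  have hmem : w.length ∈ { L : ℕ | ∃ w : List Bool, w.length = L ∧ IsSync c (m + c + 1) w } :=
    ⟨w, rfl, hw⟩
  unfold resetThreshold
  apply le_antisymm
  · exact (Nat.sInf_le hmem).trans hl
  · apply le_csInf ⟨_, hmem⟩
    rintro L ⟨w', rfl, hw'⟩
    exact lower_sync m c hm w' hw'
end

section
/- For every natural number c and every integer n ≥ c+2, the partial finite automaton C_n^c has a synchronizing word. -/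
theorem crun_app {c n q p s : ℕ} {x y : List Bool} (h1 : cernyRun c n q x = some p)
    (h2 : cernyRun c n p y = some s) : cernyRun c n q (x ++ y) = some s := by
  unfold cernyRun at *
  rw [List.foldlM_append, h1]
  exact h2

def wpow (w : List Bool) : ℕ → List Bool
  | 0 => []
  | k + 1 => w ++ wpow w k

theorem wpow_add (w : List Bool) (j k : ℕ) : wpow w (j + k) = wpow w j ++ wpow w k := by
  induction j with
  | zero => simp [wpow]
  | succ j ih => rw [Nat.succ_add]; simp [wpow, ih]

theorem crun_nil (c n q : ℕ) : cernyRun c n q [] = some q := rfl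

theorem crun_one (c n q : ℕ) (l : Bool) : cernyRun c n q [l] = cernyStep c n q l := by
  simp [cernyRun]

theorem run_b_fix (c m q k : ℕ) (h : q ≤ m) :
    cernyRun c (m + c + 1) q (wpow [true] k) = some q := by
  induction k with
  | zero => rfl
  | succ k ih =>
    refine crun_app (p := q) ?_ ih
    rw [crun_one]; simp only [cernyStep]; rw [if_pos (by omega)]

theorem run_b_up (c m k : ℕ) : ∀ q, m < q → q + k ≤ m + c + 1 →
    cernyRun c (m + c + 1) q (wpow [true] k) = some (q + k) := by
  induction k with
  | zero => intros; rfl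
  | succ k ih =>
    intro q h1 h2
    have := ih (q + 1) (by omega) (by omega)
    rw [show q + (k + 1) = q + 1 + k by omega]
    refine crun_app (p := q + 1) ?_ this
    rw [crun_one]; simp only [cernyStep]; rw [if_neg (by omega), if_neg (by omega)]

theorem run_u (c m q : ℕ) (hm : 1 ≤ m) (h1 : m < q) (h2 : q ≤ m + c + 1) :
    cernyRun c (m + c + 1) q (wpow [true] (c + 1)) = some 1 := by
  rw [show c + 1 = (m + c + 1 - q) + (1 + (q - m - 1)) by omega, wpow_add, wpow_add]
  refine crun_app (run_b_up c m _ q h1 (by omega)) (crun_app (p := 1) ?_ (run_b_fix c m 1 _ hm))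
  rw [show q + (m + c + 1 - q) = m + c + 1 by omega]
  change cernyRun _ _ _ [true] = _
  rw [crun_one]; simp only [cernyStep]; rw [if_neg (by omega), if_pos (by trivial)]

theorem run_a (c m q : ℕ) (h : q ≤ m) : cernyRun c (m + c + 1) q [false] = some (q + 1) := by
  rw [crun_one]; simp only [cernyStep]; rw [if_pos (by omega)]

theorem run_a_last (c m : ℕ) : cernyRun c (m + c + 1) (m + c + 1) [false] = some 1 := by
  rw [crun_one]; simp only [cernyStep]; rw [if_neg (by omega), if_pos (by trivial)]

def rw1 (c : ℕ) : List Bool := [false] ++ wpow [true] (c + 1)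

def vw (c : ℕ) : List Bool := [false] ++ (wpow [true] c ++ rw1 c)

theorem run_r_lt (c m q : ℕ) (h : q < m) : cernyRun c (m + c + 1) q (rw1 c) = some (q + 1) :=
  crun_app (run_a c m q h.le) (run_b_fix c m _ _ h)

theorem run_r_m (c m : ℕ) (hm : 1 ≤ m) : cernyRun c (m + c + 1) m (rw1 c) = some 1 :=
  crun_app (run_a c m m le_rfl) (run_u c m _ hm (by omega) (by omega))

theorem run_r_pow (c m k : ℕ) : ∀ q, q + k ≤ m →
    cernyRun c (m + c + 1) q (wpow (rw1 c) k) = some (q + k) := by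
  induction k with
  | zero => intros; rfl
  | succ k ih =>
    intro q h
    rw [show q + (k + 1) = q + 1 + k by omega]
    exact crun_app (run_r_lt c m q (by omega)) (ih (q + 1) (by omega))

theorem run_r_inv (c m q : ℕ) (h1 : 1 ≤ q) (h : q + 1 ≤ m) :
    cernyRun c (m + c + 1) (q + 1) (wpow (rw1 c) (m - 1)) = some q := by
  have e : wpow (rw1 c) (m - 1) = wpow (rw1 c) (m - (q + 1)) ++ (rw1 c ++ wpow (rw1 c) (q - 1)) := by
    rw [show m - 1 = (m - (q + 1)) + (q - 1 + 1) by omega, wpow_add]; rfl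
  rw [e]
  refine crun_app (p := m) ?_ (crun_app (run_r_m c m (by omega)) ?_)
  · have := run_r_pow c m (m - (q + 1)) (q + 1) (by omega)
    rwa [show q + 1 + (m - (q + 1)) = m by omega] at this
  · have := run_r_pow c m (q - 1) 1 (by omega)
    rwa [show 1 + (q - 1) = q by omega] at this

theorem run_r_inv1 (c m : ℕ) (hm : 1 ≤ m) :
    cernyRun c (m + c + 1) 1 (wpow (rw1 c) (m - 1)) = some m := by
  have := run_r_pow c m (m - 1) 1 (by omega)
  rwa [show 1 + (m - 1) = m by omega] at this

theorem run_v_m (c m : ℕ) (hm : 1 ≤ m) : cernyRun c (m + c + 1) m (vw c) = some 1 := by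
  refine crun_app (run_a c m m le_rfl) (crun_app (run_b_up c m c _ (by omega) (by omega)) ?_)
  rw [show m + 1 + c = m + c + 1 by omega]
  exact crun_app (run_a_last c m) (run_b_fix c m 1 _ hm)

theorem run_f (c m q : ℕ) (h1 : 1 ≤ q) (h : q ≤ m) :
    cernyRun c (m + c + 1) q (vw c ++ wpow (rw1 c) (m - 1)) = some (min (q + 1) m) := by
  rcases h.eq_or_lt with rfl | hlt
  · rw [min_eq_right (by omega)]
    exact crun_app (run_v_m c q h1) (run_r_inv1 c q h1)
  · rw [min_eq_left hlt]
    have h0 : ∀ p, cernyRun c (m + c + 1) (q + 1) (rw1 c) = some p →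
        cernyRun c (m + c + 1) q (vw c) = some p := fun p hp =>
      crun_app (run_a c m q h) (crun_app (run_b_fix c m _ _ hlt) hp)
    rcases Nat.eq_or_lt_of_le hlt with he | hl
    · have e : q + 1 = m := he
      refine crun_app (h0 1 ?_) (e ▸ run_r_inv1 c m (by omega))
      rw [e]; exact run_r_m c m (by omega)
    · exact crun_app (h0 _ (run_r_lt c m (q + 1) hl)) (run_r_inv c m (q + 1) (by omega) hl)

theorem run_fpow (c m k : ℕ) : ∀ q, 1 ≤ q → q ≤ m →
    cernyRun c (m + c + 1) q (wpow (vw c ++ wpow (rw1 c) (m - 1)) k) = some (min (q + k) m) := by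
  induction k with
  | zero => intro q _ h; rw [min_eq_left (by omega)]; rfl
  | succ k ih =>
    intro q h1 h
    have := ih (min (q + 1) m) (by omega) (by omega)
    rw [show min (min (q + 1) m + k) m = min (q + (k + 1)) m by omega] at this
    exact crun_app (run_f c m q h1 h) this

/-- **Lemma.** For every `c : ℕ` and every `n ≥ c+2`, the PFA `C_n^c` has a synchronizing word. -/
theorem cerny_pfa_synchronizing (c n : ℕ) (hn : c + 2 ≤ n) :
    ∃ w : List Bool, IsSync c n w := by
  obtain ⟨m, rfl⟩ : ∃ m, n = m + c + 1 := ⟨n - c - 1, by omega⟩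
  refine ⟨wpow [true] (c + 1) ++ wpow (vw c ++ wpow (rw1 c) (m - 1)) m, m, fun q hq => ?_⟩
  rw [Finset.mem_Icc] at hq
  have key : ∀ p, 1 ≤ p → p ≤ m → cernyRun c (m + c + 1) p
      (wpow (vw c ++ wpow (rw1 c) (m - 1)) m) = some m := by
    intro p h1 h2
    have := run_fpow c m m p h1 h2
    rwa [min_eq_right (by omega)] at this
  by_cases h : q ≤ m
  · exact crun_app (run_b_fix c m q _ h) (key q hq.1 h)
  · exact crun_app (run_u c m q (by omega) (by omega) hq.2) (key 1 le_rfl (by omega))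
end

section
/- For all natural numbers c ≥ 0 and all integers n ≥ 1, c·n·log₂(n) ≤ f_c(n) ≤ (c + 1/2)·n·⌈log₂(n)⌉. -/
theorem fc_le_aux (c n i : ℕ) (h1 : 1 ≤ i) (h2 : i + 1 ≤ n) :
    fc c n ≤ fc c i + fc c (n - i) + (c + 1) * n - i := by
  obtain ⟨m, rfl⟩ : ∃ m, n = m + 2 := ⟨n - 2, by omega⟩
  rw [fc]
  exact Finset.inf'_le (s := (Finset.Icc 1 (m + 1)).attach)
    (f := fun i => fc c i.1 + fc c (m + 2 - i.1) + (c + 1) * (m + 2) - i.1)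
    (b := ⟨i, Finset.mem_Icc.mpr ⟨h1, by omega⟩⟩) (Finset.mem_attach _ _)

theorem fc_eq_aux (c n : ℕ) (h : 2 ≤ n) :
    ∃ i, 1 ≤ i ∧ i + 1 ≤ n ∧ fc c n = fc c i + fc c (n - i) + (c + 1) * n - i := by
  obtain ⟨m, rfl⟩ : ∃ m, n = m + 2 := ⟨n - 2, by omega⟩
  obtain ⟨b, -, hb⟩ := Finset.exists_mem_eq_inf' (s := (Finset.Icc 1 (m + 1)).attach)
    (Finset.attach_nonempty_iff.mpr ⟨1, by simp⟩)
    (fun i => fc c i.1 + fc c (m + 2 - i.1) + (c + 1) * (m + 2) - i.1)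
  have := Finset.mem_Icc.mp b.2
  refine ⟨b.1, this.1, by omega, ?_⟩
  rw [← hb, fc]

theorem fc_upper_aux (c n : ℕ) (hn : 1 ≤ n) :
    2 * fc c n ≤ (2 * c + 1) * n * Nat.clog 2 n := by
  induction n using Nat.strong_induction_on with
  | _ n ih =>
    rcases Nat.lt_or_ge n 2 with h | h
    · obtain rfl : n = 1 := by omega
      simp [fc]
    · have e : Nat.clog 2 n = Nat.clog 2 ((n + 1) / 2) + 1 := by
        rw [Nat.clog_of_two_le (by norm_num) h]
        rfl
      have h0 := fc_le_aux c n ((n + 1) / 2) (by omega) (by omega)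
      have a := ih ((n + 1) / 2) (by omega) (by omega)
      have b := ih (n - (n + 1) / 2) (by omega) (by omega)
      have m : Nat.clog 2 (n - (n + 1) / 2) ≤ Nat.clog 2 ((n + 1) / 2) :=
        Nat.clog_mono_right 2 (by omega)
      rw [e]
      generalize Nat.clog 2 (n - (n + 1) / 2) = k' at *
      generalize Nat.clog 2 ((n + 1) / 2) = k at *
      obtain ⟨i, hi⟩ : ∃ i, i = (n + 1) / 2 := ⟨_, rfl⟩
      rw [← hi] at h0 a b
      obtain ⟨j, hj⟩ : ∃ j, j = n - i := ⟨_, rfl⟩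
      rw [← hj] at h0 b
      have hij : n = i + j := by omega
      have b' : 2 * fc c j ≤ (2 * c + 1) * j * k := b.trans (Nat.mul_le_mul_left _ m)
      have h2 : n ≤ 2 * i := by omega
      have h3 : fc c n + i ≤ fc c i + fc c j + (c + 1) * n := by
        have : i ≤ (c + 1) * n := by nlinarith
        omega
      have h4 : (2 * c + 1) * n * (k + 1)
          = (2 * c + 1) * i * k + (2 * c + 1) * j * k + (2 * c + 1) * n := by
        rw [hij]; ring
      rw [h4]
      nlinarith

theorem xlog_aux (x y : ℝ) (hx : 0 < x) (hy : 0 < y) :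
    (x + y) * Real.logb 2 (x + y) ≤ x * Real.logb 2 x + y * Real.logb 2 y + (x + y) := by
  have h := Real.convexOn_mul_log.2 (Set.mem_Ici.mpr hx.le) (Set.mem_Ici.mpr hy.le)
    (by norm_num : (0 : ℝ) ≤ 1 / 2) (by norm_num : (0 : ℝ) ≤ 1 / 2) (by norm_num)
  simp only [smul_eq_mul] at h
  have e : 1 / 2 * x + 1 / 2 * y = (x + y) / 2 := by ring
  rw [e, Real.log_div (by positivity) (by norm_num)] at h
  have l2 : 0 < Real.log 2 := Real.log_pos (by norm_num)
  simp only [Real.logb]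
  have : x * (Real.log x / Real.log 2) + y * (Real.log y / Real.log 2) + (x + y)
      = (x * Real.log x + y * Real.log y + (x + y) * Real.log 2) / Real.log 2 := by
    field_simp
  rw [this, ← mul_div_assoc]
  gcongr
  nlinarith

theorem fc_lower_aux (c n : ℕ) (hn : 1 ≤ n) :
    (c : ℝ) * (n : ℝ) * Real.logb 2 (n : ℝ) ≤ (fc c n : ℝ) := by
  induction n using Nat.strong_induction_on with
  | _ n ih =>
    rcases Nat.lt_or_ge n 2 with h | h
    · obtain rfl : n = 1 := by omega
      simp [fc]
    · obtain ⟨i, h1, h2, h3⟩ := fc_eq_aux c n h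
      obtain ⟨j, rfl⟩ : ∃ j, n = i + j := ⟨n - i, by omega⟩
      rw [Nat.add_sub_cancel_left] at h3
      have a := ih i (by omega) h1
      have b := ih j (by omega) (by omega)
      have h4 : fc c i + fc c j + c * (i + j) ≤ fc c (i + j) := by
        rw [h3, Nat.add_mul, Nat.one_mul]; omega
      have h5 : (fc c i + fc c j + c * (i + j) : ℝ) ≤ fc c (i + j) := by exact_mod_cast h4
      have x := xlog_aux i j (by exact_mod_cast h1) (by exact_mod_cast (by omega : 0 < j))
      have y := mul_le_mul_of_nonneg_left x (Nat.cast_nonneg (α := ℝ) c)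
      push_cast
      linarith

/-- **Proposition.** For all `c ≥ 0` and all `n ≥ 1`,
`c·n·log₂(n) ≤ f_c(n) ≤ (c + 1/2)·n·⌈log₂(n)⌉`. -/
theorem fc_log_bounds (c n : ℕ) (hn : 1 ≤ n) :
    (c : ℝ) * (n : ℝ) * Real.logb 2 (n : ℝ) ≤ (fc c n : ℝ) ∧
    (fc c n : ℝ) ≤ ((c : ℝ) + 1 / 2) * (n : ℝ) * ((⌈Real.logb 2 (n : ℝ)⌉ : ℤ) : ℝ) := by
  refine ⟨fc_lower_aux c n hn, ?_⟩
  have e : ⌈Real.logb 2 (n : ℝ)⌉ = (Nat.clog 2 n : ℤ) := by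
    have := Real.ceil_logb_natCast (b := 2) (r := (n : ℝ)) (by positivity)
    rw [Int.clog_natCast] at this
    exact_mod_cast this
  rw [e]
  have h : (2 * fc c n : ℝ) ≤ (2 * c + 1) * n * Nat.clog 2 n := by
    exact_mod_cast fc_upper_aux c n hn
  push_cast
  linarith
end

section
/- Let r(C_n^c) denote the reset threshold of C_n^c. Then max_{0 ≤ c ≤ n−2} r(C_n^c) is asymptotically equivalent to (1/4)·n²·log₂(n) as n → ∞, i.e. the ratio of these two quantities tends to 1. -/
namespace CernyAux

lemma step_a (c m q : ℕ) : cernyStep c (m+c+1) q false =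
    if q ≤ m then some (q + 1) else if q = m+c+1 then some 1 else none := by
  have : m + c + 1 - c - 1 = m := by omega
  simp [cernyStep, this]

lemma step_b (c m q : ℕ) : cernyStep c (m+c+1) q true =
    if q ≤ m then some q else if q = m+c+1 then some 1 else some (q+1) := by
  have : m + c + 1 - c - 1 = m := by omega
  simp [cernyStep, this]

lemma run_nil (c n q : ℕ) : cernyRun c n q [] = some q := rfl

lemma run_cons (c n q : ℕ) (x : Bool) (w : List Bool) :
    cernyRun c n q (x :: w) = (cernyStep c n q x).bind (fun q' => cernyRun c n q' w) := by
  simp [cernyRun, List.foldlM_cons]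

lemma run_append (c n q : ℕ) (u w : List Bool) :
    cernyRun c n q (u ++ w) = (cernyRun c n q u).bind (fun q' => cernyRun c n q' w) := by
  simp [cernyRun, List.foldlM_append]

lemma run_trans {c n q q' : ℕ} {r : Option ℕ} {u w : List Bool} (h : cernyRun c n q u = some q')
    (h' : cernyRun c n q' w = r) : cernyRun c n q (u ++ w) = r := by
  rw [run_append, h]; exact h'

lemma run_b_low (c m q k : ℕ) (h : q ≤ m) :
    cernyRun c (m+c+1) q (List.replicate k true) = some q := by
  induction k with
  | zero => rfl
  | succ k ih => rw [List.replicate_succ, run_cons, step_b, if_pos h]; exact ih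

lemma run_b_up (c m : ℕ) : ∀ k q, m < q → q + k ≤ m+c+1 →
    cernyRun c (m+c+1) q (List.replicate k true) = some (q+k) := by
  intro k
  induction k with
  | zero => intro q _ _; rfl
  | succ k ih =>
    intro q h1 h2
    rw [List.replicate_succ, run_cons, step_b, if_neg (by omega), if_neg (by omega)]
    show cernyRun _ _ (q+1) _ = _
    rw [ih (q+1) (by omega) (by omega)]
    congr 1; omega

lemma run_one_b_top (c m : ℕ) : cernyRun c (m+c+1) (m+c+1) [true] = some 1 := by
  rw [run_cons, step_b, if_neg (by omega), if_pos rfl]; rfl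

lemma run_init (c m q : ℕ) (hm : 1 ≤ m) (h1 : 1 ≤ q) (h2 : q ≤ m+c+1) :
    ∃ x < m, cernyRun c (m+c+1) q (List.replicate (c+1) true) = some (x+1) := by
  by_cases h : q ≤ m
  · exact ⟨q-1, by omega, by rw [run_b_low c m q _ h]; congr 1; omega⟩
  · refine ⟨0, hm, ?_⟩
    have e : List.replicate (c+1) true = List.replicate (m+c+1-q) true ++ ([true] ++ List.replicate (c-(m+c+1-q)) true) := by
      rw [← List.replicate_one, ← List.replicate_add, ← List.replicate_add]; congr 1; omega
    rw [e]
    refine run_trans (run_b_up c m _ q (by omega) (by omega)) ?_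
    have : q + (m+c+1-q) = m+c+1 := by omega
    rw [this]
    exact run_trans (run_one_b_top c m) (run_b_low c m 1 _ hm)

/-- macro word -/
def mac (c : ℕ) (u v : Bool) : List Bool :=
  [false] ++ ((if u then List.replicate c true else []) ++ (if v then [true] else []))

/-- reduced position to state -/
def stt (c m i : ℕ) : ℕ := if i < m then i + 1 else m+c+1

lemma blk_low (c m q : ℕ) (u v : Bool) (h : q ≤ m) :
    cernyRun c (m+c+1) q ((if u then List.replicate c true else []) ++ (if v then [true] else [])) = some q := by
  have h1 : cernyRun c (m+c+1) q (if u then List.replicate c true else []) = some q := by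
    cases u
    · rfl
    · exact run_b_low c m q c h
  refine run_trans h1 ?_
  cases v
  · rfl
  · exact run_b_low c m q 1 h

lemma mac_low (c m i : ℕ) (u v : Bool) (h : i + 1 < m) :
    cernyRun c (m+c+1) (stt c m i) (mac c u v) = some (stt c m (i+1)) := by
  have e1 : stt c m i = i+1 := by simp [stt]; omega
  have e2 : stt c m (i+1) = i+2 := by simp [stt]; omega
  rw [e1, e2, mac]
  refine run_trans (q' := i+2) ?_ (blk_low c m _ u v (by omega))
  rw [run_cons, step_a, if_pos (by omega)]; rfl

lemma mac_top (c m : ℕ) (u v : Bool) (hm : 1 ≤ m) :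
    cernyRun c (m+c+1) (stt c m m) (mac c u v) = some (stt c m 0) := by
  have e1 : stt c m m = m+c+1 := by simp [stt]
  have e2 : stt c m 0 = 1 := by simp [stt]; omega
  rw [e1, e2, mac]
  refine run_trans (q' := 1) ?_ (blk_low c m _ u v (by omega))
  rw [run_cons, step_a, if_neg (by omega), if_pos rfl]; rfl

lemma mac_cross (c m i : ℕ) (v : Bool) (h : i + 1 = m) :
    cernyRun c (m+c+1) (stt c m i) (mac c true v) = some (stt c m (if v then 0 else m)) := by
  have e1 : stt c m i = i+1 := by simp [stt]; omega
  rw [e1, mac]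
  refine run_trans (q' := m+1) ?_ ?_
  · rw [run_cons, step_a, if_pos (by omega)]; simp [run_nil, h]
  refine run_trans (q' := m+c+1) ?_ ?_
  · rw [if_pos rfl, run_b_up c m c (m+1) (by omega) (by omega)]; congr 1; omega
  cases v
  · simp [stt, run_nil]
  · have : 0 < m := by omega
    simp only [if_true, run_one_b_top, stt, this]

lemma mac_len (c : ℕ) (u v : Bool) : (mac c u v).length = 1 + (if u then c else 0) + (if v then 1 else 0) := by
  cases u <;> cases v <;> simp [mac] <;> omega

/-- round prefix -/
def rnd (c m : ℕ) (T A : ℕ → Bool) : ℕ → List Bool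
  | 0 => []
  | s+1 => rnd c m T A s ++ mac c (T (m-1-s)) (A (m-1-s))

def ps (m : ℕ) (A : ℕ → Bool) (i s : ℕ) : ℕ :=
  if i + s < m then i + s else
    if A i then i + s - m else if i + s = m then m else i + s - m - 1

lemma rnd_run (c m : ℕ) (T A : ℕ → Bool) (i : ℕ) (hi : i < m) (hT : T i = true) :
    ∀ s ≤ m, cernyRun c (m+c+1) (stt c m i) (rnd c m T A s) = some (stt c m (ps m A i s)) := by
  intro s
  induction s with
  | zero => intro _; simp [rnd, ps, hi, run_nil]
  | succ s ih =>
    intro hs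
    refine run_trans (ih (by omega)) ?_
    by_cases h1 : i + s + 1 < m
    · have e1 : ps m A i s = i + s := by unfold ps; rw [if_pos (by omega)]
      have e2 : ps m A i (s+1) = i + s + 1 := by unfold ps; rw [if_pos (by omega)]; omega
      rw [e1, e2]; exact mac_low _ _ _ _ _ h1
    by_cases h2 : i + s + 1 = m
    · have e1 : ps m A i s = i + s := by unfold ps; rw [if_pos (by omega)]
      have e3 : m - 1 - s = i := by omega
      have e2 : ps m A i (s+1) = if A i then 0 else m := by
        unfold ps; rw [if_neg (by omega)]; split_ifs <;> omega
      rw [e1, e2, e3, hT]; exact mac_cross _ _ _ _ h2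
    · by_cases hA : A i = true
      · have e1 : ps m A i s = i + s - m := by unfold ps; rw [if_neg (by omega), if_pos hA]
        have e2 : ps m A i (s+1) = i + s - m + 1 := by unfold ps; rw [if_neg (by omega), if_pos hA]; omega
        rw [e1, e2]; exact mac_low _ _ _ _ _ (by omega)
      · by_cases h3 : i + s = m
        · have e1 : ps m A i s = m := by unfold ps; rw [if_neg (by omega), if_neg hA, if_pos h3]
          have e2 : ps m A i (s+1) = 0 := by
            unfold ps; rw [if_neg (by omega), if_neg hA, if_neg (by omega)]; omega
          rw [e1, e2]; exact mac_top _ _ _ _ (by omega)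
        · have e1 : ps m A i s = i + s - m - 1 := by
            unfold ps; rw [if_neg (by omega), if_neg hA, if_neg (by omega)]
          have e2 : ps m A i (s+1) = i + s - m - 1 + 1 := by
            unfold ps; rw [if_neg (by omega), if_neg hA, if_neg (by omega)]; omega
          rw [e1, e2]; exact mac_low _ _ _ _ _ (by omega)

lemma rnd_len (c m : ℕ) (T : Finset ℕ) (A : ℕ → Bool) : ∀ s ≤ m,
    (rnd c m (fun x => decide (x ∈ T)) A s).length ≤ 2 * s + c * (T.filter (fun x => m - s ≤ x)).card := by
  intro s
  induction s with
  | zero => intro _; simp [rnd]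
  | succ s ih =>
    intro hs
    have ih := ih (by omega)
    rw [rnd, List.length_append, mac_len]
    have hA : (if A (m-1-s) = true then 1 else 0) ≤ 1 := by split_ifs <;> omega
    by_cases h : m - 1 - s ∈ T
    · have : (T.filter (fun x => m - s ≤ x)).card + 1 ≤ (T.filter (fun x => m - (s+1) ≤ x)).card := by
        rw [← Finset.card_insert_of_notMem (a := m-1-s)]
        · apply Finset.card_le_card
          intro x
          simp only [Finset.mem_insert, Finset.mem_filter]
          rintro (rfl | ⟨h1, h2⟩)
          · exact ⟨h, by omega⟩
          · exact ⟨h1, by omega⟩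
        · simp only [Finset.mem_filter]; omega
      have := Nat.mul_le_mul_left c this
      simp only [h, decide_true, if_true]
      rw [Nat.mul_add] at this
      omega
    · have : (T.filter (fun x => m - s ≤ x)).card ≤ (T.filter (fun x => m - (s+1) ≤ x)).card := by
        apply Finset.card_le_card
        intro x
        simp only [Finset.mem_filter]
        rintro ⟨h1, h2⟩
        exact ⟨h1, by omega⟩
      have := Nat.mul_le_mul_left c this
      simp only [h, decide_false]
      simp only [Bool.false_eq_true, if_false]
      omega

def R (m K x : ℕ) : ℕ := if x + 1 < m ∧ (x+1) % K ≠ 0 then x + 1 else x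

lemma R_lt {m K x : ℕ} (h : x < m) : R m K x < m := by
  unfold R; split_ifs <;> omega

lemma round (c m K : ℕ) (T : Finset ℕ) (hT : ∀ x ∈ T, x < m) :
    ∃ w : List Bool, w.length ≤ 2*m+1 + c * T.card ∧
      ∀ x ∈ T, cernyRun c (m+c+1) (x+1) w = some (R m K x + 1) := by
  let A : ℕ → Bool := fun x => decide (x + 1 < m ∧ (x+1) % K ≠ 0)
  refine ⟨rnd c m (fun x => decide (x ∈ T)) A m ++ mac c false false, ?_, ?_⟩
  · have := rnd_len c m T A m le_rfl
    rw [List.length_append, mac_len]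
    have h2 : (T.filter (fun x => m - m ≤ x)).card ≤ T.card := Finset.card_filter_le _ _
    have := Nat.mul_le_mul_left c h2
    simp only [Bool.false_eq_true, if_false]
    omega
  · intro x hx
    have hxm := hT x hx
    have h := rnd_run c m (fun x => decide (x ∈ T)) A x hxm (by simpa using hx) m le_rfl
    have e0 : stt c m x = x + 1 := by simp [stt, hxm]
    rw [e0] at h
    have e9 : R m K x + 1 = stt c m (R m K x) := by simp [stt, R_lt hxm]
    rw [e9]
    refine run_trans h ?_
    by_cases hA : x + 1 < m ∧ (x+1) % K ≠ 0
    · have e1 : ps m A x m = x := by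
        unfold ps; rw [if_neg (by omega), if_pos (by simpa [A] using hA)]; omega
      rw [e1, R, if_pos hA]
      exact mac_low _ _ _ _ _ hA.1
    · rw [R, if_neg hA]
      by_cases h0 : x = 0
      · subst h0
        have e1 : ps m A 0 m = m := by
          unfold ps; rw [if_neg (by omega), if_neg (by simpa [A] using hA), if_pos (by omega)]
        rw [e1]; exact mac_top _ _ _ _ (by omega)
      · have e1 : ps m A x m = x - 1 := by
          unfold ps; rw [if_neg (by omega), if_neg (by simpa [A] using hA), if_neg (by omega)]; omega
        rw [e1]
        have := mac_low c m (x-1) false false (by omega)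
        rwa [show x - 1 + 1 = x by omega] at this

lemma R_iter_lt {m K : ℕ} (r : ℕ) : ∀ {x : ℕ}, x < m → (R m K)^[r] x < m := by
  induction r with
  | zero => intro x h; exact h
  | succ r ih => intro x h; rw [Function.iterate_succ_apply']; exact R_lt (ih h)

lemma rounds (c m K : ℕ) (T : Finset ℕ) (hT : ∀ x ∈ T, x < m) (r : ℕ) :
    ∃ w : List Bool, w.length ≤ r * (2*m+1 + c * T.card) ∧
      ∀ x ∈ T, cernyRun c (m+c+1) (x+1) w = some ((R m K)^[r] x + 1) := by
  induction r with
  | zero => exact ⟨[], by simp, fun x _ => rfl⟩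
  | succ r ih =>
    obtain ⟨w, hw, hr⟩ := ih
    obtain ⟨w', hw', hr'⟩ := round c m K (T.image (R m K)^[r]) (by
      intro x hx
      obtain ⟨y, hy, rfl⟩ := Finset.mem_image.1 hx
      exact R_iter_lt r (hT y hy))
    refine ⟨w ++ w', ?_, ?_⟩
    · rw [List.length_append]
      have : (T.image (R m K)^[r]).card ≤ T.card := Finset.card_image_le
      have := Nat.mul_le_mul_left c this
      rw [Nat.add_mul, Nat.one_mul]
      omega
    · intro x hx
      rw [Function.iterate_succ_apply']
      exact run_trans (hr x hx) (hr' _ (Finset.mem_image_of_mem _ hx))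

lemma R_fix {m K x : ℕ} (hx : x < m) (h : x + 1 = m ∨ K ∣ x + 1) (r : ℕ) : (R m K)^[r] x = x := by
  apply Function.iterate_fixed
  unfold R
  rw [if_neg]
  rintro ⟨h1, h2⟩
  rcases h with h | h
  · omega
  · exact h2 (Nat.mod_eq_zero_of_dvd h)

lemma R_iter (m K x : ℕ) (hx : x < m) (r : ℕ) :
    ((R m K)^[r] x + 1 = m ∨ K ∣ (R m K)^[r] x + 1) ∨ (R m K)^[r] x = x + r := by
  induction r with
  | zero => right; rfl
  | succ r ih =>
    rw [Function.iterate_succ_apply']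
    have hlt := R_iter_lt (K := K) r hx
    rcases ih with h | h
    · left
      have := R_fix hlt h 1
      rw [Function.iterate_one] at this
      rw [this]; exact h
    · by_cases h' : (R m K)^[r] x + 1 < m ∧ ((R m K)^[r] x + 1) % K ≠ 0
      · right; rw [R, if_pos h']; omega
      · left; rw [R, if_neg h']
        by_cases h1 : (R m K)^[r] x + 1 < m
        · right; exact Nat.dvd_of_mod_eq_zero (by tauto)
        · left; omega

lemma stage_fix (m j x : ℕ) (hx : x < m) (h : x + 1 = m ∨ 2^j ∣ x + 1) :
    (R m (2^(j+1)))^[2^j] x + 1 = m ∨ 2^(j+1) ∣ (R m (2^(j+1)))^[2^j] x + 1 := by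
  rcases h with h | h
  · rw [R_fix hx (Or.inl h)]; exact Or.inl h
  · obtain ⟨k, hk⟩ := h
    rcases Nat.even_or_odd' k with ⟨l, rfl | rfl⟩
    · have : 2^(j+1) ∣ x + 1 := ⟨l, by rw [hk]; ring⟩
      rw [R_fix hx (Or.inr this)]; exact Or.inr this
    · rcases R_iter m (2^(j+1)) x hx (2^j) with h' | h'
      · exact h'
      · right; rw [h']; refine ⟨l+1, ?_⟩
        have : x + 2^j + 1 = (x+1) + 2^j := by ring
        rw [this, hk]; ring

/-- tokens allowed at stage j -/
def TS (m j : ℕ) : Finset ℕ := (Finset.range m).filter (fun x => x + 1 = m ∨ 2^j ∣ x + 1)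

lemma TS_card (m j : ℕ) : (TS m j).card ≤ m / 2^j + 1 := by
  have hsub : TS m j ⊆ insert (m-1) ((Finset.range (m/2^j)).image (fun k => 2^j*(k+1) - 1)) := by
    intro x hx
    simp only [TS, Finset.mem_filter, Finset.mem_range] at hx
    obtain ⟨hx, h | ⟨k, hk⟩⟩ := hx
    · rw [Finset.mem_insert]; left; omega
    · rw [Finset.mem_insert]; right
      rw [Finset.mem_image]
      have hk0 : k ≠ 0 := by rintro rfl; omega
      refine ⟨k-1, ?_, ?_⟩
      · rw [Finset.mem_range]
        have : k ≤ m / 2^j := by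
          rw [Nat.le_div_iff_mul_le (by positivity), mul_comm]; omega
        omega
      · rw [show k - 1 + 1 = k by omega, ← hk]; omega
  refine (Finset.card_le_card hsub).trans ((Finset.card_insert_le _ _).trans ?_)
  have := (Finset.card_image_le (s := Finset.range (m/2^j)) (f := fun k => 2^j*(k+1) - 1))
  rw [Finset.card_range] at this
  omega

lemma stages (c m : ℕ) (J : ℕ) :
    ∃ w : List Bool, w.length ≤ J * (c * m) + 2^J * (2*m+1+c) ∧
      ∀ x < m, ∃ y ∈ TS m J, cernyRun c (m+c+1) (x+1) w = some (y+1) := by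
  induction J with
  | zero => exact ⟨[], by simp, fun x hx => ⟨x, by simp [TS, hx], rfl⟩⟩
  | succ j ih =>
    obtain ⟨w, hw, hr⟩ := ih
    obtain ⟨w', hw', hr'⟩ := rounds c m (2^(j+1)) (TS m j) (by
      intro x hx; simp only [TS, Finset.mem_filter, Finset.mem_range] at hx; exact hx.1) (2^j)
    refine ⟨w ++ w', ?_, ?_⟩
    · rw [List.length_append]
      have h1 := TS_card m j
      have h2 : 2^j * (m/2^j) ≤ m := Nat.mul_div_le m (2^j)
      have h3 : 2^j * (2*m+1 + c * (TS m j).card) ≤ 2^j * (2*m+1+c) + c * m := by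
        calc 2^j * (2*m+1 + c * (TS m j).card) ≤ 2^j * (2*m+1 + c * (m/2^j+1)) := by gcongr
          _ = 2^j * (2*m+1+c) + c * (2^j * (m/2^j)) := by ring
          _ ≤ _ := by gcongr
      calc _ ≤ _ := Nat.add_le_add hw (hw'.trans h3)
        _ = _ := by ring
    · intro x hx
      obtain ⟨y, hy, hxy⟩ := hr x hx
      refine ⟨_, ?_, run_trans hxy (hr' y hy)⟩
      simp only [TS, Finset.mem_filter, Finset.mem_range] at hy ⊢
      exact ⟨R_iter_lt _ hy.1, stage_fix m j y hy.1 hy.2⟩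

lemma exists_sync (c m : ℕ) (hm : 1 ≤ m) :
    ∃ w : List Bool, w.length ≤ (c + 1) + (Nat.clog 2 m * (c * m) + 2^(Nat.clog 2 m) * (2*m+1+c)) ∧
      IsSync c (m+c+1) w := by
  obtain ⟨w, hw, hr⟩ := stages c m (Nat.clog 2 m)
  refine ⟨List.replicate (c+1) true ++ w, ?_, m, ?_⟩
  · rw [List.length_append, List.length_replicate]; omega
  · intro q hq
    rw [Finset.mem_Icc] at hq
    obtain ⟨x, hx, h⟩ := run_init c m q hm hq.1 hq.2
    refine run_trans h ?_
    obtain ⟨y, hy, h'⟩ := hr x hx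
    rw [h']
    simp only [TS, Finset.mem_filter, Finset.mem_range] at hy
    have hp : m ≤ 2^(Nat.clog 2 m) := Nat.le_pow_clog (by norm_num) m
    rcases hy.2 with h2 | h2
    · rw [h2]
    · have := Nat.le_of_dvd (by omega) h2
      congr 1; omega

lemma reset_upper (c m : ℕ) (hm : 1 ≤ m) : resetThreshold c (m+c+1) ≤
    (c + 1) + (Nat.clog 2 m * (c * m) + 2^(Nat.clog 2 m) * (2*m+1+c)) := by
  obtain ⟨w, hw, hs⟩ := exists_sync c m hm
  have h : w.length ∈ { L : ℕ | ∃ w : List Bool, w.length = L ∧ IsSync c (m+c+1) w } := ⟨w, rfl, hs⟩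
  exact (Nat.sInf_le h).trans hw

lemma reset_upper_real (n c : ℕ) (hc : c < n - 1) : (resetThreshold c n : ℝ) ≤
    (1/4) * (n:ℝ)^2 * Real.logb 2 n + 20 * (n:ℝ)^2 := by
  obtain ⟨m, rfl⟩ : ∃ m, n = m + c + 1 := ⟨n - c - 1, by omega⟩
  have hm : 1 ≤ m := by omega
  have h := reset_upper c m hm
  have hm' : (1:ℝ) ≤ m := by exact_mod_cast hm
  have hc0 : (0:ℝ) ≤ c := by positivity
  have hlog0 : 0 ≤ Real.logb 2 m := Real.logb_nonneg (by norm_num) hm'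
  have hlogn : Real.logb 2 m ≤ Real.logb 2 ((m + c + 1 : ℕ):ℝ) := by
    apply Real.logb_le_logb_of_le (by norm_num) (by linarith)
    push_cast; linarith
  have hcl : (Nat.clog 2 m : ℝ) ≤ Real.logb 2 m + 1 := by
    have : (Nat.clog 2 m : ℝ) = ⌈Real.logb 2 m⌉₊ := by
      rw [← Real.natCeil_logb_natCast]; norm_cast
    rw [this]
    exact (Nat.ceil_lt_add_one hlog0).le
  have hpw : 2^(Nat.clog 2 m) ≤ 2 * m := by
    by_cases h1 : m = 1
    · subst h1; simp
    · have := Nat.pow_pred_clog_lt_self (b := 2) (by norm_num) (x := m) (by omega)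
      have h0 : 0 < Nat.clog 2 m := Nat.clog_pos (by norm_num) (by omega)
      obtain ⟨k, hk⟩ : ∃ k, Nat.clog 2 m = k + 1 := ⟨Nat.clog 2 m - 1, by omega⟩
      rw [hk] at this ⊢
      simp only [Nat.pred_eq_sub_one, Nat.add_sub_cancel] at this
      rw [pow_succ]; omega
  have hpw' : (2:ℝ)^(Nat.clog 2 m) ≤ 2 * m := by exact_mod_cast hpw
  have h' : (resetThreshold c (m+c+1) : ℝ) ≤ (c + 1) + (Nat.clog 2 m * (c * m) + 2^(Nat.clog 2 m) * (2*m+1+c)) := by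
    exact_mod_cast h
  have hcm : (0:ℝ) ≤ c * m := by positivity
  have h1 : (Nat.clog 2 m : ℝ) * (c * m) ≤ (Real.logb 2 m + 1) * (c*m) := by gcongr
  have h2 : (2:ℝ)^(Nat.clog 2 m) * (2*m+1+c) ≤ 2 * m * (2*m+1+c) := by gcongr
  have h3 : Real.logb 2 m * (c*m) ≤ (1/4) * ((m + c + 1 : ℕ):ℝ)^2 * Real.logb 2 ((m + c + 1 : ℕ):ℝ) := by
    rw [mul_comm (Real.logb 2 (m:ℝ))]
    apply mul_le_mul _ hlogn hlog0 (by positivity)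
    push_cast
    nlinarith [sq_nonneg ((m:ℝ) - c)]
  have h4 : (c:ℝ) + 1 + c * m + 2 * m * (2*m+1+c) ≤ 20 * ((m + c + 1 : ℕ):ℝ)^2 := by
    push_cast
    nlinarith [mul_nonneg hc0 hc0]
  nlinarith


lemma xlogx_split (x y : ℝ) (hx : 0 < x) (hy : 0 < y) :
    (x+y) * Real.logb 2 (x+y) - (x+y) ≤ x * Real.logb 2 x + y * Real.logb 2 y := by
  obtain ⟨_, hconv⟩ := Real.convexOn_mul_log
  have h := hconv (Set.mem_Ici.2 hx.le) (Set.mem_Ici.2 hy.le)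
    (show (0:ℝ) ≤ 1/2 by norm_num) (show (0:ℝ) ≤ 1/2 by norm_num) (by norm_num)
  simp only [smul_eq_mul] at h
  have e : (1/2:ℝ) * x + 1/2 * y = (x+y)/2 := by ring
  rw [e, Real.log_div (by positivity) (by norm_num)] at h
  have l2 : 0 < Real.log 2 := Real.log_pos (by norm_num)
  unfold Real.logb
  have : x * (Real.log x / Real.log 2) + y * (Real.log y / Real.log 2) - ((x+y) * (Real.log (x+y) / Real.log 2) - (x+y))
     = (x * Real.log x + y * Real.log y - ((x+y) * (Real.log (x+y) - Real.log 2))) / Real.log 2 := by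
    field_simp
  have h2 : 0 ≤ (x * Real.log x + y * Real.log y - ((x+y) * (Real.log (x+y) - Real.log 2))) / Real.log 2 := by
    apply div_nonneg _ l2.le
    linarith
  linarith

lemma split_sum (c : ℕ) (B : ℕ → ℕ) : ∀ len i : ℕ,
    (∀ i' j', i ≤ i' → i' < j' → j' ≤ i + len → ∃ p, i' ≤ p ∧ p < j' ∧ c * (j' - i' - 1) ≤ B p) →
    (c:ℝ) * (((len:ℝ)+1) * Real.logb 2 ((len:ℝ)+1) - 2 * len) ≤ ((∑ p ∈ Finset.Ico i (i+len), B p : ℕ) : ℝ) := by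
  intro len
  induction len using Nat.strong_induction_on with
  | _ len ih =>
    intro i h
    rcases Nat.eq_zero_or_pos len with rfl | hl
    · simp
    obtain ⟨p, hp1, hp2, hp3⟩ := h i (i+len) le_rfl (by omega) le_rfl
    obtain ⟨l, rfl⟩ : ∃ l, p = i + l := ⟨p - i, by omega⟩
    obtain ⟨r, rfl⟩ : ∃ r, len = l + 1 + r := ⟨len - l - 1, by omega⟩
    have hL := ih l (by omega) i (fun i' j' h1 h2 h3 => h i' j' h1 h2 (by omega))
    have hR := ih r (by omega) (i+l+1) (fun i' j' h1 h2 h3 => h i' j' (by omega) h2 (by omega))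
    have hs : ∑ p ∈ Finset.Ico i (i+(l+1+r)), B p =
        ∑ p ∈ Finset.Ico i (i+l), B p + B (i+l) + ∑ p ∈ Finset.Ico (i+l+1) (i+l+1+r), B p := by
      rw [← Finset.sum_Ico_succ_top (by omega), Finset.sum_Ico_consecutive _ (by omega) (by omega)]
      congr 2; omega
    rw [hs]
    push_cast at hL hR ⊢
    have hB : (c:ℝ) * (l + r) ≤ B (i+l) := by
      rw [show i + (l+1+r) - i - 1 = l + r by omega] at hp3
      exact_mod_cast hp3
    have hx := xlogx_split ((l:ℝ)+1) ((r:ℝ)+1) (by positivity) (by positivity)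
    have hc : (0:ℝ) ≤ c := by positivity
    have hx' := mul_le_mul_of_nonneg_left hx hc
    have e : (l:ℝ)+1+r+1 = (l:ℝ)+1+(r+1) := by ring
    rw [e]
    nlinarith

/-- lifted step -/
def lstep (m n : ℕ) (l : Bool) (y : ℕ) : ℕ := if l = true ∧ y % n < m then y else y + 1

def pos (m n : ℕ) (W : ℕ → Bool) (y : ℕ) : ℕ → ℕ
  | 0 => y
  | s+1 => lstep m n (W s) (pos m n W y s)

lemma divmod_succ (n y : ℕ) (hn : 0 < n) :
    (y % n + 1 = n ∧ (y+1) % n = 0 ∧ (y+1)/n = y/n+1) ∨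
    (y % n + 1 < n ∧ (y+1) % n = y % n + 1 ∧ (y+1)/n = y/n) := by
  have h := Nat.mod_lt y hn
  have e := Nat.div_add_mod y n
  rcases Nat.lt_or_ge (y % n + 1) n with h1 | h1
  · right
    have e2 : y + 1 = (y % n + 1) + n * (y/n) := by omega
    refine ⟨h1, ?_, ?_⟩
    · rw [e2, Nat.add_mul_mod_self_left, Nat.mod_eq_of_lt h1]
    · conv_lhs => rw [e2, Nat.add_mul_div_left _ _ hn, Nat.div_eq_of_lt h1]
      omega
  · left
    have h2 : y % n + 1 = n := by omega
    have e2 : y + 1 = n * (y/n+1) := by rw [Nat.mul_add]; omega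
    refine ⟨h2, ?_, ?_⟩
    · rw [e2, Nat.mul_mod_right]
    · conv_lhs => rw [e2, Nat.mul_div_cancel_left _ hn]

lemma lstep_mono (m n : ℕ) (l : Bool) {y z : ℕ} (h : y ≤ z) : lstep m n l y ≤ lstep m n l z := by
  rcases Nat.eq_or_lt_of_le h with rfl | h
  · exact le_rfl
  · unfold lstep; split_ifs <;> omega

lemma pos_mono (m n : ℕ) (W : ℕ → Bool) {y z : ℕ} {s t : ℕ} (hst : s ≤ t)
    (h : pos m n W y s ≤ pos m n W z s) : pos m n W y t ≤ pos m n W z t := by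
  induction t, hst using Nat.le_induction with
  | base => exact h
  | succ t _ ih => exact lstep_mono _ _ _ ih

lemma pos_add (m n : ℕ) (W : ℕ → Bool) (y s : ℕ) : pos m n W (y+n) s = pos m n W y s + n := by
  induction s with
  | zero => rfl
  | succ s ih =>
    simp only [pos, ih, lstep, Nat.add_mod_right]
    split_ifs <;> omega

/-- laps weight -/
def bet (c m n y : ℕ) : ℕ := c * (y/n) + (y % n - m)
def rho (m n y : ℕ) : ℕ := (m+1) * (y/n) + min (y % n) m

/-- starting point -/
def st (c m p : ℕ) : ℕ := if p < m then p else p + (c+1)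

section
variable {c m : ℕ} {W : ℕ → Bool} {L : ℕ}

lemma bet_step (l : Bool) (y : ℕ) :
    bet c m (m+c+1) (lstep m (m+c+1) l y) ≤ bet c m (m+c+1) y +
      (if m ≤ y % (m+c+1) ∧ y % (m+c+1) < m + c then 1 else 0) := by
  unfold lstep
  split_ifs with h1 h2 h2
  · omega
  · omega
  · unfold bet
    rcases divmod_succ (m+c+1) y (by omega) with ⟨a, b, d⟩ | ⟨a, b, d⟩
    · omega
    · rw [b, d]; omega
  · unfold bet
    rcases divmod_succ (m+c+1) y (by omega) with ⟨a, b, d⟩ | ⟨a, b, d⟩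
    · rw [b, d, Nat.mul_add]; omega
    · rw [b, d]; omega

lemma rho_succ (y : ℕ) (h : y % (m+c+1) < m ∨ y % (m+c+1) = m + c) :
    rho m (m+c+1) (y+1) = rho m (m+c+1) y + 1 := by
  unfold rho
  rcases divmod_succ (m+c+1) y (by omega) with ⟨a, b, d⟩ | ⟨a, b, d⟩
  · rw [b, d, Nat.mul_add]; omega
  · rw [b, d]; omega

lemma rho_le_succ (y : ℕ) : rho m (m+c+1) y ≤ rho m (m+c+1) (y+1) := by
  unfold rho
  rcases divmod_succ (m+c+1) y (by omega) with ⟨a, b, d⟩ | ⟨a, b, d⟩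
  · rw [b, d, Nat.mul_add]; omega
  · rw [b, d]; omega

lemma rho_b (y : ℕ) : rho m (m+c+1) (lstep m (m+c+1) true y) + y/(m+c+1) ≤
    rho m (m+c+1) y + (lstep m (m+c+1) true y)/(m+c+1) := by
  unfold lstep
  split_ifs with h
  · omega
  · unfold rho
    rcases divmod_succ (m+c+1) y (by omega) with ⟨a, b, d⟩ | ⟨a, b, d⟩
    · rw [b, d, Nat.mul_add]; omega
    · rw [b, d]; simp at h; omega

lemma inv_step (l : Bool) (y z d : ℕ)
    (hy : l = false → y % (m+c+1) < m ∨ y % (m+c+1) = m + c)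
    (hz : l = false → z % (m+c+1) < m ∨ z % (m+c+1) = m + c)
    (h : rho m (m+c+1) y + d ≤ rho m (m+c+1) z + y/(m+c+1)) :
    rho m (m+c+1) (lstep m (m+c+1) l y) + d ≤
      rho m (m+c+1) (lstep m (m+c+1) l z) + (lstep m (m+c+1) l y)/(m+c+1) := by
  cases l
  · have e : ∀ x, lstep m (m+c+1) false x = x + 1 := by intro x; simp [lstep]
    rw [e, e, rho_succ y (hy rfl), rho_succ z (hz rfl)]
    have : y/(m+c+1) ≤ (y+1)/(m+c+1) := Nat.div_le_div_right (by omega)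
    omega
  · have h1 := rho_b (c := c) (m := m) y
    have h2 : rho m (m+c+1) z ≤ rho m (m+c+1) (lstep m (m+c+1) true z) := by
      unfold lstep
      split_ifs
      · exact le_rfl
      · exact rho_le_succ z
    omega

lemma st_mod {p : ℕ} (hp : p < 2*m) : st c m p % (m+c+1) < m := by
  unfold st
  split_ifs with h
  · rw [Nat.mod_eq_of_lt (by omega)]; exact h
  · have : p + (c+1) = (p - m) + (m+c+1) := by omega
    rw [this, Nat.add_mod_right, Nat.mod_eq_of_lt (by omega)]; omega

lemma st_lt {p q : ℕ} (h : p < q) : st c m p < st c m q := by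
  unfold st; split_ifs <;> omega

lemma bet_st {p : ℕ} (hp : p < 2*m) : bet c m (m+c+1) (st c m p) ≤ c := by
  have h := st_mod (c := c) hp
  unfold bet
  have : st c m p / (m+c+1) < 2 := by
    rw [Nat.div_lt_iff_lt_mul (by omega)]
    unfold st; split_ifs <;> omega
  have := Nat.mul_le_mul_left c (Nat.le_of_lt_succ this)
  omega

lemma inv_st {i j : ℕ} (hij : i < j) (hj : j < 2*m) :
    rho m (m+c+1) (st c m i) + (j - i) ≤ rho m (m+c+1) (st c m j) + st c m i/(m+c+1) := by
  have key : ∀ p < 2*m, rho m (m+c+1) (st c m p) = if p < m then p else p + 1 := by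
    intro p hp
    unfold st rho
    split_ifs with h
    · rw [Nat.mod_eq_of_lt (by omega), Nat.div_eq_of_lt (by omega)]; omega
    · have : p + (c+1) = (p - m) + (m+c+1) := by omega
      rw [this, Nat.add_mod_right, Nat.mod_eq_of_lt (by omega), Nat.add_div_right _ (by omega),
        Nat.div_eq_of_lt (by omega)]; omega
  rw [key i (by omega), key j hj]
  generalize st c m i/(m+c+1) = e
  split_ifs <;> omega

lemma one_high (hm : 1 ≤ m)
    (leg : ∀ s < L, ∀ y, W s = false → pos m (m+c+1) W y s % (m+c+1) < m ∨ pos m (m+c+1) W y s % (m+c+1) = m + c)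
    (y z : ℕ) (hy : y % (m+c+1) < m) (hz : z % (m+c+1) < m) :
    ∀ s ≤ L, m ≤ pos m (m+c+1) W y s % (m+c+1) → m ≤ pos m (m+c+1) W z s % (m+c+1) →
      pos m (m+c+1) W y s % (m+c+1) = pos m (m+c+1) W z s % (m+c+1) := by
  intro s
  induction s with
  | zero => intro _ h1 _; simp only [pos] at h1; omega
  | succ s ih =>
    intro hs h1 h2
    have ih := ih (by omega)
    have ly := leg s (by omega) y
    have lz := leg s (by omega) z
    simp only [pos] at h1 h2 ⊢
    generalize pos m (m+c+1) W y s = a at *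
    generalize pos m (m+c+1) W z s = b at *
    have da := divmod_succ (m+c+1) a (by omega)
    have db := divmod_succ (m+c+1) b (by omega)
    cases hW : W s
    · rw [hW] at h1 h2
      simp only [lstep, Bool.false_eq_true, false_and, if_false] at h1 h2 ⊢
      have := ly hW
      have := lz hW
      omega
    · rw [hW] at h1 h2
      simp only [lstep, true_and] at h1 h2 ⊢
      split_ifs at h1 h2 ⊢ <;> omega

open Classical in
lemma lower_core (hm : 1 ≤ m)
    (leg : ∀ s < L, ∀ y, W s = false → pos m (m+c+1) W y s % (m+c+1) < m ∨ pos m (m+c+1) W y s % (m+c+1) = m + c)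
    (fin : ∀ y z, pos m (m+c+1) W y L % (m+c+1) = pos m (m+c+1) W z L % (m+c+1)) :
    (c:ℝ) * ((m:ℝ) * Real.logb 2 m - 2 * m) ≤ L := by
  set n := m+c+1 with hn
  let X : ℕ → ℕ → ℕ := fun p s => pos m n W (st c m p) s
  have Xmono : ∀ {p q s}, p ≤ q → X p s ≤ X q s := by
    intro p q s h
    rcases Nat.eq_or_lt_of_le h with rfl | h
    · exact le_rfl
    · exact pos_mono m n W (Nat.zero_le s) (st_lt h).le
  have Xper : ∀ p < m, ∀ s, X (p+m) s = X p s + n := by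
    intro p hp s
    have : st c m (p+m) = st c m p + n := by unfold st; split_ifs <;> omega
    simp only [X, this, pos_add]
  -- cut
  have hex : ∃ h, X h L = X 0 L + n := ⟨m, by have := Xper 0 (by omega) L; rwa [Nat.zero_add] at this⟩
  let h := Nat.find hex
  have hh : X h L = X 0 L + n := Nat.find_spec hex
  have hhm : h ≤ m := Nat.find_min' hex (by have := Xper 0 (by omega) L; rwa [Nat.zero_add] at this)
  have hlow : ∀ p < h, X p L = X 0 L := by
    intro p hp
    have h1 : X 0 L ≤ X p L := Xmono (Nat.zero_le p)
    have h2 : X p L ≤ X 0 L + n := by rw [← hh]; exact Xmono hp.le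
    have h3 : X p L ≠ X 0 L + n := Nat.find_min hex hp
    have h4 : X p L % n = X 0 L % n := fin _ _
    have h5 : X 0 L ≡ X p L [MOD n] := h4.symm
    have h6 := (Nat.modEq_iff_dvd' h1).1 h5
    have h7 := Nat.eq_zero_of_dvd_of_lt h6 (by omega)
    omega
  have hpos : 0 < h := by
    rcases Nat.eq_zero_or_pos h with h0 | h0
    · rw [h0] at hh; omega
    · exact h0
  have hwin : ∀ p, h ≤ p → p < h + m → X p L = X 0 L + n := by
    intro p h1 h2
    apply le_antisymm
    · calc X p L ≤ X (h-1+m) L := Xmono (by omega)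
        _ = X (h-1) L + n := Xper _ (by omega) _
        _ = X 0 L + n := by rw [hlow _ (by omega)]
    · rw [← hh]; exact Xmono h1
  let P : ℕ → ℕ → Prop := fun p s => (m ≤ X p s % n ∧ X p s % n < m + c) ∧ X p s ≠ X (p+1) s
  let S : ℕ → Finset ℕ := fun p => (Finset.range L).filter (P p)
  have hdis : ∀ p q s, h ≤ p → p < q → q < h + m → s < L → P p s → P q s → False := by
    intro p q s h1 h2 h3 hs hp hq
    have e : X p s % n = X q s % n :=
      one_high hm leg _ _ (st_mod (by omega)) (st_mod (by omega)) s hs.le hp.1.1 hq.1.1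
    have l1 : X p s < X q s := lt_of_lt_of_le (lt_of_le_of_ne (Xmono (Nat.le_succ p)) hp.2) (Xmono h2)
    have e' : X p s ≡ X q s [MOD n] := e
    have d := (Nat.modEq_iff_dvd' l1.le).1 e'
    have l2 := Nat.le_of_dvd (by omega) d
    have l3 : pos m n W (st c m p + n) s ≤ pos m n W (st c m q) s := by
      rw [pos_add]; show X p s + n ≤ X q s; omega
    have l4 := pos_mono m n W hs.le l3
    rw [pos_add] at l4
    have l5 : X p L + n ≤ X q L := l4
    rw [hwin p h1 (by omega), hwin q (by omega) h3] at l5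
    omega
  have hsum : ∑ p ∈ Finset.Ico h (h+(m-1)), (S p).card ≤ L := by
    rw [← Finset.card_biUnion]
    · calc _ ≤ (Finset.range L).card := Finset.card_le_card (by
            intro s hs
            obtain ⟨p, _, hp⟩ := Finset.mem_biUnion.1 hs
            exact (Finset.mem_filter.1 hp).1)
        _ = L := Finset.card_range L
    · intro p hp q hq hpq
      rw [Finset.mem_coe, Finset.mem_Ico] at hp hq
      rw [Function.onFun, Finset.disjoint_left]
      intro s hs1 hs2
      obtain ⟨a1, a2⟩ := Finset.mem_filter.1 hs1
      obtain ⟨b1, b2⟩ := Finset.mem_filter.1 hs2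
      rw [Finset.mem_range] at a1
      rcases Nat.lt_or_gt_of_ne hpq with l | l
      · exact hdis p q s hp.1 l (by omega) a1 a2 b2
      · exact hdis q p s hq.1 l (by omega) a1 b2 a2
  have hcount : ∀ p t, t ≤ L → (∀ s < t, X p s ≠ X (p+1) s) →
      bet c m n (X p t) ≤ bet c m n (st c m p) + ((Finset.range t).filter (P p)).card := by
    intro p t
    induction t with
    | zero => intro _ _; simp [X, pos]
    | succ t ih =>
      intro ht hne
      have ih := ih (by omega) (fun s hs => hne s (by omega))
      have hb := bet_step (c := c) (m := m) (W t) (X p t)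
      rw [← hn] at hb
      have hX : X p (t+1) = lstep m n (W t) (X p t) := rfl
      rw [hX]
      refine hb.trans ?_
      rw [Finset.range_add_one, Finset.filter_insert]
      by_cases hP : m ≤ X p t % n ∧ X p t % n < m + c
      · have hP' : P p t := ⟨hP, hne t (by omega)⟩
        rw [if_pos hP, if_pos hP', Finset.card_insert_of_notMem (by simp)]
        omega
      · have hP' : ¬ P p t := fun h => hP h.1
        rw [if_neg hP, if_neg hP']
        omega
  have hwindow : ∀ i j, h ≤ i → i < j → j ≤ h + (m-1) →
      ∃ p, i ≤ p ∧ p < j ∧ c * (j - i - 1) ≤ (S p).card := by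
    intro i j hi hij hj
    have hmeet : ∃ t, X i t = X j t := ⟨L, by rw [hwin i hi (by omega), hwin j (by omega) (by omega)]⟩
    let t := Nat.find hmeet
    have ht : X i t = X j t := Nat.find_spec hmeet
    have htL : t ≤ L := Nat.find_min' hmeet (by rw [hwin i hi (by omega), hwin j (by omega) (by omega)])
    have ht0 : t ≠ 0 := by
      intro h0
      rw [h0] at ht
      exact absurd ht (st_lt hij).ne
    have hprev : X i (t-1) ≠ X j (t-1) := Nat.find_min hmeet (show t - 1 < t by omega)
    obtain ⟨p, hp1, hp2, hp3⟩ : ∃ p, i ≤ p ∧ p < j ∧ X p (t-1) ≠ X (p+1) (t-1) := by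
      by_contra hcon
      push Not at hcon
      apply hprev
      have : ∀ q, i ≤ q → q ≤ j → X i (t-1) = X q (t-1) := by
        intro q hq
        induction q, hq using Nat.le_induction with
        | base => intro _; rfl
        | succ q hq ih => intro hqj; rw [ih (by omega), hcon q hq (by omega)]
      exact this j hij.le le_rfl
    refine ⟨p, hp1, hp2, ?_⟩
    have hne : ∀ s < t, X p s ≠ X (p+1) s := by
      intro s hs he
      apply hp3
      exact le_antisymm (pos_mono m n W (by omega) he.le) (pos_mono m n W (by omega) he.ge)
    have hc := hcount p t htL hne
    have hinv : ∀ s ≤ L, rho m n (X i s) + (j - i) ≤ rho m n (X j s) + X i s / n := by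
      intro s
      induction s with
      | zero => intro _; exact inv_st hij (by omega)
      | succ s ih =>
        intro hs
        exact inv_step (W s) _ _ _ (leg s (by omega) _) (leg s (by omega) _) (ih (by omega))
    have hk := hinv t htL
    rw [ht] at hk
    have hk2 : j - i ≤ X i t / n := by rw [ht]; omega
    have hk3 : X i t / n ≤ X p t / n := Nat.div_le_div_right (Xmono hp1)
    have hk4 : c * (j - i) ≤ bet c m n (X p t) := by
      unfold bet
      have := Nat.mul_le_mul_left c (hk2.trans hk3)
      omega
    have hk5 : bet c m n (st c m p) ≤ c := bet_st (by omega)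
    have hk6 : ((Finset.range t).filter (P p)).card ≤ (S p).card := by
      apply Finset.card_le_card
      apply Finset.filter_subset_filter
      intro s; simp only [Finset.mem_range]; omega
    rw [Nat.mul_sub, Nat.mul_one]
    omega
  have hfinal := split_sum c (fun p => (S p).card) (m-1) h hwindow
  have hcast : ((m - 1 : ℕ) : ℝ) = (m:ℝ) - 1 := by push_cast [hm]; ring
  rw [hcast] at hfinal
  have hL : ((∑ p ∈ Finset.Ico h (h+(m-1)), (S p).card : ℕ) : ℝ) ≤ L := by exact_mod_cast hsum
  have hc0 : (0:ℝ) ≤ c := by positivity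
  rw [sub_add_cancel] at hfinal
  nlinarith

end

lemma step_compat (c m y q : ℕ) (l : Bool) (hm : 1 ≤ m)
    (h : cernyStep c (m+c+1) (y % (m+c+1) + 1) l = some q) :
    q = lstep m (m+c+1) l y % (m+c+1) + 1 ∧
    (l = false → y % (m+c+1) < m ∨ y % (m+c+1) = m + c) := by
  have d := divmod_succ (m+c+1) y (by omega)
  cases l
  · rw [step_a] at h
    simp only [lstep, Bool.false_eq_true, false_and, if_false]
    split_ifs at h <;> simp only [Option.some.injEq] at h <;> omega
  · rw [step_b] at h
    refine ⟨?_, by simp⟩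
    simp only [lstep, true_and]
    split_ifs at h ⊢ <;> simp only [Option.some.injEq] at h <;> omega

lemma run_compat (c m : ℕ) (hm : 1 ≤ m) (w : List Bool) (hw : IsSync c (m+c+1) w) (y : ℕ) :
    ∀ s ≤ w.length, cernyRun c (m+c+1) (y % (m+c+1) + 1) (w.take s) =
      some (pos m (m+c+1) (fun s => w.getD s false) y s % (m+c+1) + 1) ∧
      (s < w.length → w.getD s false = false →
        pos m (m+c+1) (fun s => w.getD s false) y s % (m+c+1) < m ∨
        pos m (m+c+1) (fun s => w.getD s false) y s % (m+c+1) = m + c) := by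
  obtain ⟨qs, hqs⟩ := hw
  have hall := hqs (y % (m+c+1) + 1) (by
    rw [Finset.mem_Icc]
    have := Nat.mod_lt y (show 0 < m+c+1 by omega)
    omega)
  have hsplit : ∀ s (hs : s < w.length) q, cernyRun c (m+c+1) (y % (m+c+1) + 1) (w.take s) = some q →
      ∃ q', cernyStep c (m+c+1) q (w.getD s false) = some q' := by
    intro s hs q hq
    have e : w = w.take s ++ (w.getD s false :: w.drop (s+1)) := by
      rw [List.getD_eq_getElem _ _ hs, ← List.drop_eq_getElem_cons hs, List.take_append_drop]
    rw [e, run_append, hq] at hall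
    simp only [Option.bind_some] at hall
    rw [run_cons] at hall
    cases hc : cernyStep c (m+c+1) q (w.getD s false) with
    | none => rw [hc] at hall; simp at hall
    | some q' => exact ⟨q', rfl⟩
  intro s
  induction s with
  | zero =>
    intro _
    refine ⟨by simp [pos, run_nil], fun hs => ?_⟩
    obtain ⟨q', hq'⟩ := hsplit 0 hs (y % (m+c+1) + 1) (by simp [run_nil])
    exact (step_compat c m y q' _ hm hq').2
  | succ s ih =>
    intro hs
    have ih := (ih (by omega)).1
    have h1 : cernyRun c (m+c+1) (y % (m+c+1) + 1) (w.take (s+1)) =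
      some (pos m (m+c+1) (fun s => w.getD s false) y (s+1) % (m+c+1) + 1) := by
      obtain ⟨q', hq'⟩ := hsplit s (by omega) _ ih
      have e : w.take (s+1) = w.take s ++ [w.getD s false] := by
        rw [List.getD_eq_getElem _ _ (by omega)]; simp
      rw [e]
      refine run_trans ih ?_
      rw [run_cons, hq', Option.bind_some, run_nil]
      rw [(step_compat c m _ q' _ hm hq').1]
      rfl
    refine ⟨h1, fun hs => ?_⟩
    obtain ⟨q', hq'⟩ := hsplit (s+1) hs _ h1
    exact (step_compat c m _ q' _ hm hq').2

lemma reset_lower (c m : ℕ) (hm : 1 ≤ m) :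
    (c:ℝ) * ((m:ℝ) * Real.logb 2 m - 2 * m) ≤ resetThreshold c (m+c+1) := by
  have hne : { L : ℕ | ∃ w : List Bool, w.length = L ∧ IsSync c (m+c+1) w }.Nonempty := by
    obtain ⟨w, _, hs⟩ := exists_sync c m hm
    exact ⟨_, w, rfl, hs⟩
  obtain ⟨w, hl, hs⟩ := Nat.sInf_mem hne
  change w.length = resetThreshold c (m+c+1) at hl
  rw [← hl]
  refine lower_core (W := fun s => w.getD s false) hm ?_ ?_
  · intro s hs' y
    exact (run_compat c m hm w hs y s hs'.le).2 hs'
  · have key : ∃ qs, ∀ y, pos m (m+c+1) (fun s => w.getD s false) y w.length % (m+c+1) + 1 = qs := by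
      obtain ⟨qs, hqs⟩ := hs
      refine ⟨qs, fun y => ?_⟩
      have h1 := (run_compat c m hm w ⟨qs, hqs⟩ y w.length le_rfl).1
      rw [List.take_length, hqs _ (by
        rw [Finset.mem_Icc]
        have := Nat.mod_lt y (show 0 < m+c+1 by omega)
        omega)] at h1
      exact (Option.some.inj h1).symm
    obtain ⟨qs, hq⟩ := key
    intro y z
    have := hq y
    have := hq z
    omega

lemma reset_lower_real (n : ℕ) (hn : 16 ≤ n) :
    (1/4) * ((n:ℝ)-2)^2 * (Real.logb 2 n - 4) ≤
      (((Finset.range (n - 1)).sup fun c => resetThreshold c n : ℕ) : ℝ) := by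
  obtain ⟨m, hm⟩ : ∃ m, m = n/2 := ⟨_, rfl⟩
  obtain ⟨c, hc⟩ : ∃ c, c = n - 1 - m := ⟨_, rfl⟩
  have hmc : n = m + c + 1 := by omega
  have h1 : resetThreshold c n ≤ (Finset.range (n - 1)).sup fun c => resetThreshold c n :=
    Finset.le_sup (f := fun c => resetThreshold c n) (Finset.mem_range.2 (by omega))
  have h1' : (resetThreshold c n : ℝ) ≤ (((Finset.range (n - 1)).sup fun c => resetThreshold c n : ℕ) : ℝ) := by
    exact_mod_cast h1
  refine le_trans ?_ h1'
  have h2 := reset_lower c m (by omega)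
  rw [← hmc] at h2
  refine le_trans ?_ h2
  have a1 : (n:ℝ) - 2 ≤ 2 * c := by
    have : n ≤ 2 * c + 2 := by omega
    have : (n:ℝ) ≤ 2 * c + 2 := by exact_mod_cast this
    linarith
  have a2 : (n:ℝ) - 2 ≤ 2 * m := by
    have : n ≤ 2 * m + 2 := by omega
    have : (n:ℝ) ≤ 2 * m + 2 := by exact_mod_cast this
    linarith
  have hn' : (16:ℝ) ≤ n := by exact_mod_cast hn
  have a3 : (n:ℝ)/4 ≤ m := by linarith
  have l4 : Real.logb 2 4 = 2 := by
    rw [show (4:ℝ) = 2^(2:ℝ) by norm_num]; exact Real.logb_rpow (by norm_num) (by norm_num)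
  have l16 : Real.logb 2 16 = 4 := by
    rw [show (16:ℝ) = 2^(4:ℝ) by norm_num]; exact Real.logb_rpow (by norm_num) (by norm_num)
  have a4 : Real.logb 2 n - 2 ≤ Real.logb 2 m := by
    have h5 := Real.logb_le_logb_of_le (b := 2) (by norm_num) (by positivity) a3
    rw [Real.logb_div (by positivity) (by norm_num), l4] at h5
    exact h5
  have a5 : 0 ≤ Real.logb 2 n - 4 := by
    rw [← l16]
    have := Real.logb_le_logb_of_le (b := 2) (by norm_num) (by norm_num) hn'
    linarith
  have a6 : (1/4) * ((n:ℝ)-2)^2 ≤ c * m := by nlinarith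
  have a7 : (0:ℝ) ≤ c * m := by positivity
  calc (1/4) * ((n:ℝ)-2)^2 * (Real.logb 2 n - 4) ≤ (c * m) * (Real.logb 2 n - 4) := by gcongr
    _ ≤ (c * m) * (Real.logb 2 m - 2) := mul_le_mul_of_nonneg_left (by linarith) a7
    _ = _ := by ring

end CernyAux

/-- **Theorem.** The maximum over `0 ≤ c ≤ n-2` of the reset thresholds `r(C_n^c)` is
asymptotically equivalent to `(1/4)·n²·log₂(n)`: the ratio tends to `1` as `n → ∞`. -/
theorem max_resetThreshold_asymptotics :
    Filter.Tendsto
      (fun n : ℕ =>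
        ((((Finset.range (n - 1)).sup fun c => resetThreshold c n) : ℕ) : ℝ) /
          ((1 / 4) * (n : ℝ) ^ 2 * Real.logb 2 (n : ℝ)))
      Filter.atTop (nhds 1) := by
  have hlog : Filter.Tendsto (fun n : ℕ => Real.logb 2 (n:ℝ)) Filter.atTop Filter.atTop :=
    (Real.tendsto_logb_atTop (by norm_num)).comp tendsto_natCast_atTop_atTop
  have hinv : Filter.Tendsto (fun n : ℕ => (Real.logb 2 (n:ℝ))⁻¹) Filter.atTop (nhds 0) :=
    hlog.inv_tendsto_atTop
  have hninv : Filter.Tendsto (fun n : ℕ => ((n:ℝ))⁻¹) Filter.atTop (nhds 0) :=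
    tendsto_natCast_atTop_atTop.inv_tendsto_atTop
  have hlo : Filter.Tendsto (fun n : ℕ => (1 - 2 * ((n:ℝ))⁻¹)^2 * (1 - 4 * (Real.logb 2 (n:ℝ))⁻¹))
      Filter.atTop (nhds 1) := by
    have := (((hninv.const_mul 2).const_sub 1).pow 2).mul ((hinv.const_mul 4).const_sub 1)
    simpa using this
  have hup : Filter.Tendsto (fun n : ℕ => 1 + 80 * (Real.logb 2 (n:ℝ))⁻¹)
      Filter.atTop (nhds 1) := by
    have := (hinv.const_mul 80).const_add 1
    simpa using this
  refine tendsto_of_tendsto_of_tendsto_of_le_of_le' hlo hup ?_ ?_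
  · filter_upwards [Filter.eventually_ge_atTop 16] with n hn
    have hn' : (16:ℝ) ≤ n := by exact_mod_cast hn
    have hl : 0 < Real.logb 2 (n:ℝ) := Real.logb_pos (by norm_num) (by linarith)
    rw [le_div_iff₀ (by positivity)]
    refine le_trans (le_of_eq ?_) (CernyAux.reset_lower_real n hn)
    field_simp
  · filter_upwards [Filter.eventually_ge_atTop 16] with n hn
    have hn' : (16:ℝ) ≤ n := by exact_mod_cast hn
    have hl : 0 < Real.logb 2 (n:ℝ) := Real.logb_pos (by norm_num) (by linarith)
    rw [div_le_iff₀ (by positivity)]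
    have hb : (((Finset.range (n - 1)).sup fun c => resetThreshold c n : ℕ) : ℝ) ≤
        (1/4) * (n:ℝ)^2 * Real.logb 2 n + 20 * (n:ℝ)^2 := by
      obtain ⟨c, hc, he⟩ := Finset.exists_mem_eq_sup (Finset.range (n-1))
        ⟨0, Finset.mem_range.2 (by omega)⟩ (fun c => resetThreshold c n)
      rw [he]
      exact CernyAux.reset_upper_real n c (Finset.mem_range.1 hc)
    refine hb.trans (le_of_eq ?_)
    field_simp
    ring
end

section
/- For every integer n ≥ 1, f_0(n) = n − 1; consequently, for every integer n ≥ 2, the reset threshold of the Černý automaton C_n^0 equals (n−1)². -/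
/-- total step on states -/
def gS (n q : ℕ) : Bool → ℕ
  | false => if q < n then q + 1 else 1
  | true => if q < n then q else 1

lemma gS_mem (n q : ℕ) (l : Bool) (h1 : 1 ≤ q) (h2 : q ≤ n) : 1 ≤ gS n q l ∧ gS n q l ≤ n := by
  cases l <;> simp only [gS] <;> split_ifs <;> omega

lemma step_eq (n q : ℕ) (l : Bool) (h1 : 1 ≤ q) (h2 : q ≤ n) :
    cernyStep 0 n q l = some (gS n q l) := by
  rcases Nat.lt_or_ge q n with h | h
  · have h' : q ≤ n - 0 - 1 := by omega
    cases l <;> simp only [gS, cernyStep, if_pos h, if_pos h']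
  · have h' : ¬ q ≤ n - 0 - 1 := by omega
    have h3 : ¬ q < n := by omega
    have h4 : q = n := by omega
    cases l <;> simp only [gS, cernyStep, if_neg h3, if_neg h', if_pos h4]

lemma run_eq (n : ℕ) (w : List Bool) : ∀ q : ℕ, 1 ≤ q → q ≤ n →
    cernyRun 0 n q w = some (w.foldl (gS n) q) := by
  induction w with
  | nil => intro q _ _; rfl
  | cons l w ih =>
    intro q h1 h2
    have hm := gS_mem n q l h1 h2
    have := ih (gS n q l) hm.1 hm.2
    unfold cernyRun at this ⊢
    rw [List.foldlM_cons, step_eq n q l h1 h2, List.foldl_cons]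
    exact this

lemma run_disp (n : ℕ) (w : List Bool) : ∀ q : ℕ, 1 ≤ q → q ≤ n →
    1 ≤ w.foldl (gS n) q ∧ w.foldl (gS n) q ≤ n ∧
    ∃ t j : ℕ, j ≤ t ∧ q + w.count false + j = w.foldl (gS n) q + n * t := by
  induction w with
  | nil => intro q h1 h2; exact ⟨h1, h2, 0, 0, le_refl _, by simp⟩
  | cons l w ih =>
    intro q h1 h2
    have hm := gS_mem n q l h1 h2
    obtain ⟨a1, a2, t, j, hj, he⟩ := ih (gS n q l) hm.1 hm.2
    rw [List.foldl_cons]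
    refine ⟨a1, a2, ?_⟩
    rcases Nat.lt_or_ge q n with h | h
    · refine ⟨t, j, hj, ?_⟩
      rw [← he]
      cases l <;> simp [gS, h] <;> omega
    · have h3 : ¬ q < n := by omega
      cases l
      · refine ⟨t + 1, j, by omega, ?_⟩
        rw [mul_add, ← add_assoc, ← he]
        simp [gS, h3]; omega
      · refine ⟨t + 1, j + 1, by omega, ?_⟩
        rw [mul_add, ← add_assoc (List.foldl _ _ _), ← he]
        simp [gS, h3]; omega

lemma rank_bound (n r : ℕ) (w : List Bool) : ∀ S : Finset ℕ, S ⊆ Finset.Icc 1 n →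
    (∀ q ∈ S, w.foldl (gS n) q = r) → S.card ≤ w.count true + 1 := by
  induction w with
  | nil =>
    intro S _ h
    simp only [List.foldl_nil] at h
    have : S ⊆ {r} := by intro q hq; simp [h q hq]
    simpa using Finset.card_le_card this
  | cons l w ih =>
    intro S hS h
    have hb : ∀ q ∈ S, 1 ≤ q ∧ q ≤ n := fun q hq => Finset.mem_Icc.mp (hS hq)
    have key : ∀ T : Finset ℕ, T ⊆ S → (∀ x ∈ T, ∀ y ∈ T, gS n x l = gS n y l → x = y) →
        T.card ≤ w.count true + 1 := by
      intro T hT hinj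
      have := ih (T.image (fun q => gS n q l)) ?_ ?_
      · rwa [Finset.card_image_of_injOn (fun x hx y hy hxy => hinj x hx y hy hxy)] at this
      · intro x hx
        obtain ⟨q, hq, rfl⟩ := Finset.mem_image.mp hx
        have := hb q (hT hq)
        exact Finset.mem_Icc.mpr (gS_mem n q l this.1 this.2)
      · intro x hx
        obtain ⟨q, hq, rfl⟩ := Finset.mem_image.mp hx
        have := h q (hT hq)
        rwa [List.foldl_cons] at this
    cases l
    · have := key S (Finset.Subset.refl _) ?_
      · simpa using this
      · intro x hx y hy
        have := hb x hx
        have := hb y hy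
        simp only [gS]
        split_ifs <;> omega
    · have := key (S.erase n) (Finset.erase_subset _ _) ?_
      · have h2 : S.card - 1 ≤ (S.erase n).card := Finset.pred_card_le_card_erase
        simp
        omega
      · intro x hx y hy
        have hx' := Finset.mem_erase.mp hx
        have hy' := Finset.mem_erase.mp hy
        have := hb x hx'.2
        have := hb y hy'.2
        have := hx'.1
        have := hy'.1
        simp only [gS]
        split_ifs <;> omega

lemma count_a (n r : ℕ) (hn : 2 ≤ n) (w : List Bool)
    (h : ∀ q, 1 ≤ q → q ≤ n → w.foldl (gS n) q = r) : (n - 1) * (n - 2) ≤ w.count false := by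
  obtain ⟨k, rfl⟩ : ∃ k, n = k + 2 := ⟨n - 2, by omega⟩
  set A := w.count false with hA
  -- choose p in [1,n], p ≡ r + 1 - A
  set z : ℤ := ((r : ℤ) - A) % ((k + 2 : ℕ) : ℤ) with hz
  have z0 : 0 ≤ z := Int.emod_nonneg _ (by omega)
  have z1 : z < ((k + 2 : ℕ) : ℤ) := Int.emod_lt_of_pos _ (by omega)
  have hd := Int.mul_ediv_add_emod ((r : ℤ) - A) ((k + 2 : ℕ) : ℤ)
  rw [← hz] at hd
  set d := ((r : ℤ) - A) / ((k + 2 : ℕ) : ℤ)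
  obtain ⟨p, hp⟩ : ∃ p : ℕ, (p : ℤ) = z + 1 := ⟨(z + 1).toNat, by omega⟩
  obtain ⟨a1, a2, t, j, hj, he⟩ := run_disp (k + 2) w p (by omega) (by omega)
  rw [h p (by omega) (by omega)] at he a1 a2
  have he' : (p : ℤ) + A + j = r + (k + 2) * t := by rw [hA]; exact_mod_cast he
  push_cast at hd z1
  -- j + 1 = (k+2) (t + d)
  have hj1 : (j : ℤ) + 1 = (k + 2) * (t + d) := by linarith
  have hpos : 1 ≤ (t : ℤ) + d := by
    by_contra hc
    have : (t : ℤ) + d ≤ 0 := by omega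
    nlinarith
  have hjk : (k : ℤ) + 1 ≤ j := by nlinarith
  have : ((k : ℤ) + 1) * k ≤ A := by
    have : (j : ℤ) ≤ t := by exact_mod_cast hj
    have : (1 : ℤ) ≤ r := by exact_mod_cast a1
    nlinarith
  simpa using (by exact_mod_cast this : (k + 1) * k ≤ A)

lemma sync_lower (n : ℕ) (hn : 2 ≤ n) (w : List Bool) (h : IsSync 0 n w) :
    (n - 1) ^ 2 ≤ w.length := by
  obtain ⟨r, hr⟩ := h
  have h' : ∀ q, 1 ≤ q → q ≤ n → w.foldl (gS n) q = r := by
    intro q h1 h2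
    have := hr q (Finset.mem_Icc.mpr ⟨h1, h2⟩)
    rw [run_eq n w q h1 h2] at this
    exact Option.some.inj this
  have ha := count_a n r hn w h'
  have hb := rank_bound n r w (Finset.Icc 1 n) (Finset.Subset.refl _)
    (fun q hq => h' q (Finset.mem_Icc.mp hq).1 (Finset.mem_Icc.mp hq).2)
  have hl : w.count false + w.count true = w.length := by
    exact List.count_false_add_count_true w
  obtain ⟨k, rfl⟩ : ∃ k, n = k + 2 := ⟨n - 2, by omega⟩
  simp at ha hb ⊢
  nlinarith

lemma run_as (n m : ℕ) : ∀ q, 1 ≤ q → q + m ≤ n →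
    (List.replicate m false).foldl (gS n) q = q + m := by
  induction m with
  | zero => intro q _ _; rfl
  | succ m ih =>
    intro q h1 h2
    have : q < n := by omega
    rw [List.replicate_succ, List.foldl_cons]
    simp only [gS, if_pos this]
    rw [ih (q + 1) (by omega) (by omega)]
    omega

/-- `b a^{n-1}` -/
def blk (n : ℕ) : List Bool := true :: List.replicate (n - 1) false

lemma run_as' (n q : ℕ) (h1 : 2 ≤ q) (h2 : q ≤ n) :
    (List.replicate (n - 1) false).foldl (gS n) q = q - 1 := by
  have e : n - 1 = (n - q) + ((q - 2) + 1) := by omega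
  rw [e, List.replicate_add, List.foldl_append, run_as n (n - q) q (by omega) (by omega),
    List.replicate_succ, List.foldl_cons]
  have : ¬ q + (n - q) < n := by omega
  simp only [gS, if_neg this]
  rw [run_as n (q - 2) 1 (by omega) (by omega)]
  omega

lemma run_blk (n q : ℕ) (hn : 2 ≤ n) (h1 : 1 ≤ q) (h2 : q ≤ n) :
    (blk n).foldl (gS n) q = if q = 1 ∨ q = n then n else q - 1 := by
  rw [blk, List.foldl_cons]
  split_ifs with h
  · have : gS n q true = 1 := by
      simp only [gS]; split_ifs <;> omega
    rw [this, run_as n (n - 1) 1 (by omega) (by omega)]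
    omega
  · have : gS n q true = q := by
      simp only [gS]; split_ifs <;> omega
    rw [this, run_as' n q (by omega) h2]

/-- `(b a^{n-1})^k` -/
def blks (n : ℕ) : ℕ → List Bool
  | 0 => []
  | k + 1 => blks n k ++ blk n

lemma blks_len (n k : ℕ) (hn : 2 ≤ n) : (blks n k).length = k * n := by
  induction k with
  | zero => simp [blks]
  | succ k ih => simp [blks, blk, ih, add_mul]; omega

lemma run_blks (n k q : ℕ) (hn : 2 ≤ n) (h1 : 1 ≤ q) (h2 : q ≤ n) :
    1 ≤ (blks n k).foldl (gS n) q ∧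
    ((blks n k).foldl (gS n) q = n ∨ (blks n k).foldl (gS n) q + k + 1 ≤ n) := by
  induction k with
  | zero => simp [blks]; omega
  | succ k ih =>
    rw [blks, List.foldl_append]
    generalize (blks n k).foldl (gS n) q = x at ih
    rw [run_blk n x hn ih.1 (by omega)]
    split_ifs <;> omega

lemma sync_upper (n : ℕ) (hn : 2 ≤ n) :
    ∃ w : List Bool, w.length = (n - 1) ^ 2 ∧ IsSync 0 n w := by
  refine ⟨blks n (n - 2) ++ [true], ?_, 1, ?_⟩
  · obtain ⟨k, rfl⟩ : ∃ k, n = k + 2 := ⟨n - 2, by omega⟩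
    simp [blks_len]
    ring
  · intro q hq
    obtain ⟨h1, h2⟩ := Finset.mem_Icc.mp hq
    rw [run_eq n _ q h1 h2, List.foldl_append]
    have := run_blks n (n - 2) q hn h1 h2
    generalize (blks n (n - 2)).foldl (gS n) q = x at this
    simp only [List.foldl_cons, List.foldl_nil, gS, Option.some.injEq]
    split_ifs <;> omega

lemma fc_zero (n : ℕ) : fc 0 n = n - 1 := by
  induction n using Nat.strong_induction_on with
  | _ n ih =>
    match n, ih with
    | 0, _ => simp [fc]
    | 1, _ => simp [fc]
    | n + 2, ih =>
      rw [fc]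
      apply le_antisymm
      · refine (Finset.inf'_le _ (Finset.mem_attach _ ⟨n + 1, by simp⟩)).trans ?_
        simp only
        rw [ih (n + 1) (by omega), ih (n + 2 - (n + 1)) (by omega)]
        omega
      · apply Finset.le_inf'
        rintro ⟨i, hi⟩ _
        have := Finset.mem_Icc.mp hi
        simp only
        rw [ih i (by omega), ih (n + 2 - i) (by omega)]
        omega

/-- **Proposition.** `f_0(n) = n - 1` for every `n ≥ 1`; consequently, the reset threshold of
the Černý automaton `C_n^0` equals `(n-1)²` for every `n ≥ 2`. -/
theorem fc_zero_and_cerny_resetThreshold :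
    (∀ n : ℕ, 1 ≤ n → fc 0 n = n - 1) ∧
    (∀ n : ℕ, 2 ≤ n → resetThreshold 0 n = (n - 1) ^ 2) := by
  refine ⟨fun n _ => fc_zero n, fun n hn => ?_⟩
  unfold resetThreshold
  apply le_antisymm
  · exact Nat.sInf_le (sync_upper n hn)
  · refine le_csInf ⟨_, sync_upper n hn⟩ ?_
    rintro L ⟨w, rfl, hw⟩
    exact sync_lower n hn w hw
end

section
/- For all integers c ≥ 1 and n' ≥ 1 with n' < c, we have f_{c−1}(n'+1) > f_c(n'). -/
inductive PT where
  | leaf : PT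
  | node : PT → PT → PT

def PT.lv : PT → ℕ
  | .leaf => 1
  | .node l r => l.lv + r.lv

def PT.ht : PT → ℕ
  | .leaf => 0
  | .node l r => max l.ht r.ht + 1

def PT.cost (a : ℕ) : PT → ℕ
  | .leaf => 0
  | .node l r => l.cost a + r.cost a + a * (l.lv + r.lv) + r.lv

theorem PT.lv_pos (t : PT) : 1 ≤ t.lv := by
  induction t with
  | leaf => simp [PT.lv]
  | node l r hl hr => simp only [PT.lv]; omega

theorem fc_le_split (c l r : ℕ) (hl : 1 ≤ l) (hr : 1 ≤ r) :
    fc c (l + r) ≤ fc c l + fc c r + c * (l + r) + r := by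
  obtain ⟨n, hn⟩ : ∃ n, l + r = n + 2 := ⟨l + r - 2, by omega⟩
  have hm : l ∈ Finset.Icc 1 (n + 1) := by simp only [Finset.mem_Icc]; omega
  rw [hn, fc]
  refine (Finset.inf'_le _ (Finset.mem_attach _ ⟨l, hm⟩)).trans ?_
  have h1 : n + 2 - l = r := by omega
  simp only [h1, add_mul]
  omega

theorem fc_le_cost (c : ℕ) (t : PT) : fc c t.lv ≤ t.cost c := by
  induction t with
  | leaf => simp [PT.lv, fc]
  | node l r hl hr =>
    have := fc_le_split c l.lv r.lv l.lv_pos r.lv_pos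
    simp only [PT.lv, PT.cost]
    omega

theorem exists_opt (c : ℕ) : ∀ n, 1 ≤ n → ∃ t : PT, t.lv = n ∧ t.cost c = fc c n := by
  intro n
  induction n using Nat.strong_induction_on with
  | _ n ih =>
    intro hn
    rcases n with _ | _ | n
    · omega
    · exact ⟨.leaf, by simp [PT.lv], by simp [PT.cost, fc]⟩
    · rw [show n + 1 + 1 = n + 2 from rfl, fc]
      obtain ⟨i, -, hi⟩ := Finset.exists_mem_eq_inf' (Finset.attach_nonempty_iff.mpr
        (⟨1, by simp⟩ : (Finset.Icc 1 (n + 1)).Nonempty))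
        (fun i : {x // x ∈ Finset.Icc 1 (n + 1)} =>
          fc c i.1 + fc c (n + 2 - i.1) + (c + 1) * (n + 2) - i.1)
      rw [hi]
      obtain ⟨i, him⟩ := i
      have hm := Finset.mem_Icc.1 him
      obtain ⟨l, hl, hl'⟩ := ih i (by omega) (by omega)
      obtain ⟨r, hr, hr'⟩ := ih (n + 2 - i) (by omega) (by omega)
      refine ⟨.node l r, by simp only [PT.lv]; omega, ?_⟩
      have h1 : i + (n + 2 - i) = n + 2 := by omega
      simp only [PT.cost, hl, hr, hl', hr', h1, add_mul]
      omega

theorem PT.prune (a : ℕ) (t : PT) (h : 1 ≤ t.ht) :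
    ∃ s : PT, s.lv + 1 = t.lv ∧ s.ht ≤ t.ht ∧ s.cost a + a * (t.ht + 1) + 1 ≤ t.cost a := by
  induction t with
  | leaf => simp [PT.ht] at h
  | node l r ihl ihr =>
    by_cases hlr : r.ht ≤ l.ht
    · by_cases h0 : 1 ≤ l.ht
      · obtain ⟨s, h1, h2, h3⟩ := ihl h0
        refine ⟨.node s r, by simp only [PT.lv]; omega, by simp only [PT.ht]; omega, ?_⟩
        simp only [PT.cost, PT.ht, max_eq_left hlr, ← h1]
        nlinarith
      · have hl0 : l.ht = 0 := by omega
        have hr0 : r.ht = 0 := by omega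
        cases l with
        | node _ _ => simp [PT.ht] at hl0
        | leaf =>
          cases r with
          | node _ _ => simp [PT.ht] at hr0
          | leaf => exact ⟨.leaf, by simp [PT.lv], by simp [PT.ht], by simp [PT.lv, PT.ht, PT.cost]⟩
    · obtain ⟨s, h1, h2, h3⟩ := ihr (by omega)
      refine ⟨.node l s, by simp only [PT.lv]; omega, by simp only [PT.ht]; omega, ?_⟩
      simp only [PT.cost, PT.ht, max_eq_right (not_le.1 hlr).le, ← h1]
      nlinarith

theorem PT.cost_succ (a : ℕ) (t : PT) :
    ∀ H, t.ht ≤ H → t.cost (a + 1) + (H + 1) ≤ t.cost a + t.lv * (H + 1) := by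
  induction t with
  | leaf => intro H _; simp [PT.cost, PT.lv]
  | node l r hl hr =>
    intro H hH
    simp only [PT.ht] at hH
    obtain ⟨K, rfl⟩ : ∃ K, H = K + 1 := ⟨H - 1, by omega⟩
    have h1 := hl K (by omega)
    have h2 := hr K (by omega)
    simp only [PT.cost, PT.lv]
    nlinarith

/-- **Lemma.** For all `c ≥ 1` and `n' ≥ 1` with `n' < c`, we have `f_{c-1}(n'+1) > f_c(n')`. -/
theorem fc_compare (c n' : ℕ) (hc : 1 ≤ c) (hn' : 1 ≤ n') (h : n' < c) :
    fc (c - 1) (n' + 1) > fc c n' := by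
  obtain ⟨a, rfl⟩ : ∃ a, c = a + 1 := ⟨c - 1, by omega⟩
  simp only [Nat.add_sub_cancel]
  obtain ⟨t, ht, htc⟩ := exists_opt a (n' + 1) (by omega)
  have hh : 1 ≤ t.ht := by
    cases t with
    | leaf => simp [PT.lv] at ht; omega
    | node _ _ => simp [PT.ht]
  obtain ⟨s, h1, h2, h3⟩ := t.prune a hh
  have h4 := s.cost_succ a t.ht h2
  have h5 := fc_le_cost (a + 1) s
  have h6 : s.lv = n' := by omega
  rw [h6] at h4 h5
  have h7 : n' * (t.ht + 1) ≤ a * (t.ht + 1) := Nat.mul_le_mul_right _ (by omega)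
  omega
end
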